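/- arXiv:1610.07719 — 10 statements merged into one kernel-verified Lean document; each statement's English description precedes it below -/
import Mathlib

section
/- Every binary t-frameproof code of length N with n codewords induces a t-cover-free family of n subsets of a 2N-element set: replacing each entry 0 of the code's N×n representation matrix by the column (1,0)ᵀ and each entry 1 by (0,1)ᵀ yields a 2N×n binary matrix that is the representation matrix of a CFF(2N;n,t). -/
/-- The descendant set of a set `D` of codewords: all words `x` such that in every
coordinate `i`, the symbol `x i` appears as the `i`-th symbol of some codeword of `D`. -/
def descSet {N q : ℕ} (D : Finset (Fin N → Fin q)) : Set (Fin N → Fin q) :=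
  {x | ∀ i : Fin N, ∃ c ∈ D, x i = c i}

/-- `C` is a `t`-frameproof code: for every `D ⊆ C` with `|D| ≤ t`, `desc(D) ∩ C = D`. -/
def IsFrameproof {N q : ℕ} (t : ℕ) (C : Finset (Fin N → Fin q)) : Prop :=
  ∀ D : Finset (Fin N → Fin q), D ⊆ C → D.card ≤ t →
    descSet D ∩ (C : Set (Fin N → Fin q)) = (D : Set (Fin N → Fin q))

/-- A family `F` of finite sets is `t`-cover-free: no member is contained in the union of
at most `t` other (distinct) members of the family. -/
def IsCoverFree {α : Type*} [DecidableEq α] (t : ℕ) (F : Finset (Finset α)) : Prop :=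
  ∀ A₀ ∈ F, ∀ T ⊆ F.erase A₀, T.card ≤ t → ¬ A₀ ⊆ T.sup id

/-- Every binary `t`-frameproof code of length `N` with `n` codewords induces a
`t`-cover-free family of `n` subsets of a `2N`-element set (here `Fin N × Fin 2`):
replacing each entry `0` of the representation matrix by the column `(1,0)ᵀ` and each
entry `1` by `(0,1)ᵀ`, codeword `c` becomes the subset `{(i, c i) : i}`. -/
theorem stmt_4 (N t : ℕ) (C : Finset (Fin N → Fin 2)) (hC : IsFrameproof t C) :
    IsCoverFree t
        (C.image fun c => Finset.univ.image fun i : Fin N => (i, c i)) ∧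
      (C.image fun c => Finset.univ.image fun i : Fin N => (i, c i)).card
        = C.card := by
  have inj : Function.Injective
      (fun c : Fin N → Fin 2 => Finset.univ.image fun i : Fin N => (i, c i)) := by
    intro c d h
    funext i
    have h1 : (i, c i) ∈ Finset.univ.image fun i : Fin N => (i, c i) :=
      Finset.mem_image_of_mem _ (Finset.mem_univ i)
    have h2 : (i, c i) ∈ Finset.univ.image fun i : Fin N => (i, d i) :=
      (Finset.ext_iff.1 h _).1 h1
    obtain ⟨j, -, hj⟩ := Finset.mem_image.1 h2
    obtain ⟨rfl, h3⟩ := Prod.mk.inj hj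
    exact h3.symm
  refine ⟨?_, Finset.card_image_of_injective _ inj⟩
  intro A hA T hT hcard hsub
  obtain ⟨c, hc, rfl⟩ := Finset.mem_image.1 hA
  let f := (fun c : Fin N → Fin 2 => Finset.univ.image fun i : Fin N => (i, c i))
  let D := C.filter (fun d => f d ∈ T)
  have hDT : D.card ≤ t := by
    refine le_trans (Finset.card_le_card_of_injOn f ?_ inj.injOn) hcard
    intro d hd
    exact (Finset.mem_filter.1 hd).2
  have key := hC D (Finset.filter_subset _ _) hDT
  have hcD : c ∈ (D : Set (Fin N → Fin 2)) := by
    rw [← key]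
    refine ⟨?_, hc⟩
    intro i
    have h1 := hsub (Finset.mem_image_of_mem (fun i => (i, c i)) (Finset.mem_univ i))
    obtain ⟨B, hB, hiB⟩ := Finset.mem_sup.1 h1
    obtain ⟨d, hd, hdB⟩ := Finset.mem_image.1 (Finset.mem_of_mem_erase (hT hB))
    subst hdB
    obtain ⟨j, -, hj⟩ := Finset.mem_image.1 hiB
    obtain ⟨rfl, h3⟩ := Prod.mk.inj hj
    exact ⟨d, Finset.mem_filter.2 ⟨hd, hB⟩, h3.symm⟩
  have h4 := (Finset.mem_filter.1 hcD).2
  exact Finset.notMem_erase _ _ (hT h4)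
end

section
/- Let t ≥ 2, set v = ⌊(t/2+1)²⌋, and let 0 ≤ r ≤ v−2 be the integer with N ≡ r (mod v−1). Then every q-ary t-parent-identifying code of length N has at most r·q^⌈N/(v−1)⌉ + (v−1−r)·q^⌊N/(v−1)⌋ codewords; that is, M_IPP(N,q,t) ≤ r·q^⌈N/(v−1)⌉ + (v−1−r)·q^⌊N/(v−1)⌋. -/
/-- `C` is a `t`-parent-identifying (t-IPP) code: for every word `x`, if the collection
`P_t(x)` of parent sets `D ⊆ C`, `|D| ≤ t`, `x ∈ desc(D)` is nonempty, then the
intersection of all members of `P_t(x)` is nonempty. -/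
def IsIPP {N q : ℕ} (t : ℕ) (C : Finset (Fin N → Fin q)) : Prop :=
  ∀ x : Fin N → Fin q,
    (∃ D : Finset (Fin N → Fin q), D ⊆ C ∧ D.card ≤ t ∧ x ∈ descSet D) →
    ∃ c : Fin N → Fin q,
      ∀ D : Finset (Fin N → Fin q), D ⊆ C → D.card ≤ t → x ∈ descSet D → c ∈ D

def agr {N q n : ℕ} (b : Fin N → Fin n) (i : Fin n) (c d : Fin N → Fin q) : Prop :=
  ∀ j, b j = i → c j = d j

/-- Colours that have an edge inside `T`. -/
noncomputable def inn {N q n : ℕ} (b : Fin N → Fin n) (T : Finset (Fin N → Fin q)) :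
    Finset (Fin n) := by
  classical
  exact Finset.univ.filter (fun i => ∃ a ∈ T, ∃ d ∈ T, a ≠ d ∧ agr b i a d)

lemma mem_inn {N q n : ℕ} (b : Fin N → Fin n) (T : Finset (Fin N → Fin q)) (i : Fin n) :
    i ∈ inn b T ↔ ∃ a ∈ T, ∃ d ∈ T, a ≠ d ∧ agr b i a d := by
  classical
  simp [inn]

lemma prune {N q n : ℕ} (b : Fin N → Fin n) (C : Finset (Fin N → Fin q))
    (h : ∀ C' ⊆ C, C'.Nonempty → ∃ c ∈ C', ∃ i, ∀ d ∈ C', d ≠ c → ¬ agr b i c d) :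
    C.card ≤ ∑ i : Fin n, q ^ (Fintype.card {j // b j = i}) := by
  classical
  let p : Fin n → (Fin N → Fin q) → ((i : Fin n) × ({j // b j = i} → Fin q)) :=
    fun i w => ⟨i, fun j => w j.1⟩
  have key : ∀ m, ∀ C' ⊆ C, C'.card = m → C'.card ≤ ∑ i : Fin n, (C'.image (p i)).card := by
    intro m
    induction m with
    | zero => intro C' _ h0; omega
    | succ m ih =>
      intro C' hC' hm
      obtain ⟨c, hc, i, hi⟩ := h C' hC' (Finset.card_pos.mp (by omega))
      have h1 := ih (C'.erase c) ((Finset.erase_subset _ _).trans hC')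
        (by rw [Finset.card_erase_of_mem hc]; omega)
      have h2 : ∑ i : Fin n, ((C'.erase c).image (p i)).card
          < ∑ i : Fin n, (C'.image (p i)).card := by
        apply Finset.sum_lt_sum
        · intro k _
          exact Finset.card_le_card (Finset.image_subset_image (Finset.erase_subset _ _))
        · refine ⟨i, Finset.mem_univ _, Finset.card_lt_card ?_⟩
          rw [Finset.ssubset_iff_of_subset
            (Finset.image_subset_image (Finset.erase_subset _ _))]
          refine ⟨p i c, Finset.mem_image_of_mem _ hc, ?_⟩
          intro hmem
          obtain ⟨d, hd, hde⟩ := Finset.mem_image.mp hmem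
          rw [Finset.mem_erase] at hd
          apply hi d hd.2 hd.1
          intro j hj
          have h3 : (fun j : {j // b j = i} => d j.1) = (fun j : {j // b j = i} => c j.1) := by
            simpa [p] using hde
          exact (congrFun h3 ⟨j, hj⟩).symm
      rw [Finset.card_erase_of_mem hc] at h1
      omega
  refine (key _ C subset_rfl rfl).trans (Finset.sum_le_sum ?_)
  intro i _
  have : C.image (p i) ⊆ (Finset.univ : Finset ({j // b j = i} → Fin q)).image
      (fun w => (⟨i, w⟩ : (i : Fin n) × ({j // b j = i} → Fin q))) := by
    intro y hy
    obtain ⟨w, _, rfl⟩ := Finset.mem_image.mp hy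
    exact Finset.mem_image.mpr ⟨_, Finset.mem_univ _, rfl⟩
  refine (Finset.card_le_card this).trans (Finset.card_image_le.trans ?_)
  simp

lemma grow {N q n : ℕ} (b : Fin N → Fin n) (C : Finset (Fin N → Fin q)) (hne : C.Nonempty)
    (h : ∀ c ∈ C, ∀ i, ∃ d ∈ C, d ≠ c ∧ agr b i c d) (j : ℕ) :
    ∃ T ⊆ C, T.Nonempty ∧ T.card ≤ j + 1 ∧
      (inn b T = Finset.univ ∨ (T.card = j + 1 ∧ j ≤ (inn b T).card)) := by
  classical
  induction j with
  | zero =>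
    obtain ⟨c, hc⟩ := hne
    exact ⟨{c}, by simpa using hc, by simp, by simp, Or.inr (by simp)⟩
  | succ j ih =>
    obtain ⟨T, hT, hTne, hcard, hor⟩ := ih
    by_cases hu : inn b T = Finset.univ
    · exact ⟨T, hT, hTne, by omega, Or.inl hu⟩
    · have hor := hor.resolve_left hu
      obtain ⟨i, hi⟩ : ∃ i, i ∉ inn b T := by
        by_contra! hcon
        exact hu (Finset.eq_univ_iff_forall.mpr hcon)
      obtain ⟨c, hc⟩ := hTne
      obtain ⟨d, hd, hdc, ha⟩ := h c (hT hc) i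
      have hdT : d ∉ T := fun hdT => hi ((mem_inn b T i).mpr ⟨c, hc, d, hdT, hdc.symm, ha⟩)
      have hcT : (insert d T).card = T.card + 1 := Finset.card_insert_of_notMem hdT
      refine ⟨insert d T, Finset.insert_subset hd hT, ⟨d, by simp⟩, by omega,
        Or.inr ⟨by omega, ?_⟩⟩
      have hsub : insert i (inn b T) ⊆ inn b (insert d T) := by
        intro k hk
        rw [mem_inn]
        rcases Finset.mem_insert.mp hk with rfl | hk
        · exact ⟨c, by simp [hc], d, by simp, hdc.symm, ha⟩
        · obtain ⟨x, hx, y, hy, hxy⟩ := (mem_inn b T k).mp hk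
          exact ⟨x, by simp [hx], y, by simp [hy], hxy⟩
      have := Finset.card_le_card hsub
      rw [Finset.card_insert_of_notMem hi] at this
      omega

lemma not_ipp {N q n t : ℕ} (b : Fin N → Fin n) (C T : Finset (Fin N → Fin q)) (hT : T ⊆ C)
    (hTt : T.card ≤ t)
    (h : ∀ c ∈ T, ∀ i, ∃ d ∈ C, d ≠ c ∧ agr b i c d)
    (f : Fin n → (Fin N → Fin q)) (hf : ∀ i, f i ∈ T)
    (hfc : ∀ c ∈ T, T.card + (Finset.univ.filter (fun i => i ∉ inn b T ∧ f i = c)).card ≤ t + 1) :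
    ¬ IsIPP t C := by
  classical
  intro hC
  have hg : ∀ i, ∃ a ∈ T, (i ∉ inn b T → a = f i) ∧
      (i ∈ inn b T → ∃ d ∈ T, a ≠ d ∧ agr b i a d) := by
    intro i
    by_cases hi : i ∈ inn b T
    · obtain ⟨a, ha, d, hd, h1⟩ := (mem_inn b T i).mp hi
      exact ⟨a, ha, fun h => absurd hi h, fun _ => ⟨d, hd, h1⟩⟩
    · exact ⟨f i, hf i, fun _ => rfl, fun h => absurd h hi⟩
  choose g hgT hg1 hg2 using hg
  have hx : (fun j => g (b j) j) ∈ descSet T := fun j => ⟨g (b j), hgT _, rfl⟩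
  obtain ⟨c, hc⟩ := hC (fun j => g (b j) j) ⟨T, hT, hTt, hx⟩
  have hcT := hc T hT hTt hx
  choose nb hnC hne hag using h c hcT
  let S := Finset.univ.filter (fun i => i ∉ inn b T ∧ f i = c)
  have hD := hc (T.erase c ∪ S.image nb) ?_ ?_ ?_
  · rcases Finset.mem_union.mp hD with h1 | h1
    · simp at h1
    · obtain ⟨i, _, hi⟩ := Finset.mem_image.mp h1
      exact hne i hi
  · apply Finset.union_subset ((Finset.erase_subset _ _).trans hT)
    intro y hy
    obtain ⟨i, _, rfl⟩ := Finset.mem_image.mp hy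
    exact hnC i
  · have h1 := Finset.card_union_le (T.erase c) (S.image nb)
    have h2 : (S.image nb).card ≤ S.card := Finset.card_image_le
    have h3 : T.card + S.card ≤ t + 1 := hfc c hcT
    have h4 := Finset.card_erase_of_mem hcT
    have h5 : 0 < T.card := Finset.card_pos.mpr ⟨c, hcT⟩
    omega
  · intro j
    by_cases hgc : g (b j) = c
    · by_cases hi : b j ∈ inn b T
      · obtain ⟨d, hd, hcd, hagd⟩ := hg2 _ hi
        refine ⟨d, ?_, hagd j rfl⟩
        simp only [Finset.mem_union, Finset.mem_erase]
        exact Or.inl ⟨fun h => hcd (hgc.trans h.symm), hd⟩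
      · refine ⟨nb (b j), ?_, ?_⟩
        · apply Finset.mem_union_right
          apply Finset.mem_image_of_mem
          simp only [S, Finset.mem_filter, Finset.mem_univ, true_and]
          exact ⟨hi, (hg1 _ hi).symm.trans hgc⟩
        · show g (b j) j = _
          rw [hgc]
          exact hag (b j) j rfl
    · exact ⟨g (b j), by simp [hgc, hgT], rfl⟩

lemma distrib_fn {α : Type*} [DecidableEq α] {n l : ℕ} (T : Finset α) (hT : T.Nonempty)
    (U : Finset (Fin n)) (hU : (Finset.univ \ U).card ≤ T.card * l) :
    ∃ f : Fin n → α, (∀ i, f i ∈ T) ∧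
      ∀ c ∈ T, (Finset.univ.filter (fun i => i ∉ U ∧ f i = c)).card ≤ l := by
  classical
  obtain ⟨a, ha⟩ := hT
  have hc : Fintype.card (↥(Finset.univ \ U)) ≤ Fintype.card (T × Fin l) := by
    rw [Fintype.card_coe]; simpa using hU
  obtain ⟨e⟩ := Function.Embedding.nonempty_of_card_le hc
  have hm : ∀ {i}, i ∉ U → i ∈ Finset.univ \ U := by intro i hi; simpa using hi
  refine ⟨fun i => if h : i ∉ U then (e ⟨i, hm h⟩).1.1 else a, ?_, ?_⟩
  · intro i
    by_cases h : i ∉ U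
    · simp only [h, not_false_eq_true, dif_pos]
      exact (e ⟨i, hm h⟩).1.2
    · simpa only [h, dif_neg, not_false_eq_true] using ha
  · intro c hcT
    refine le_of_le_of_eq ?_ (Finset.card_fin l)
    by_cases hl : l = 0
    · subst hl
      have : ∀ i, i ∈ U := by
        intro i
        by_contra h
        exact (e ⟨i, hm h⟩).2.elim0
      simp [this]
    · have : NeZero l := ⟨hl⟩
      apply Finset.card_le_card_of_injOn
        (fun i => if h : i ∉ U then (e ⟨i, hm h⟩).2 else 0)
      · intro i _; simp
      · intro i hi j hj hij
        simp only [Finset.coe_filter, Finset.mem_univ, true_and, Set.mem_setOf_eq] at hi hj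
        obtain ⟨hi1, hi2⟩ := hi
        obtain ⟨hj1, hj2⟩ := hj
        simp only [hi1, hj1, not_false_eq_true, dif_pos] at hi2 hj2 hij
        have h1 : e ⟨i, hm hi1⟩ = e ⟨j, hm hj1⟩ :=
          Prod.ext (Subtype.ext (hi2.trans hj2.symm)) hij
        simpa using e.injective h1

lemma IsIPP_bound {N q n t k l : ℕ} (hkt : k + 1 ≤ t) (hl : k + 1 + l = t + 1)
    (hn : n ≤ k + (k + 1) * l) (b : Fin N → Fin n)
    (C : Finset (Fin N → Fin q)) (hC : IsIPP t C) :
    C.card ≤ ∑ i : Fin n, q ^ (Fintype.card {j // b j = i}) := by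
  classical
  apply prune
  by_contra! hcon
  obtain ⟨C', hC', hne, h⟩ := hcon
  obtain ⟨T, hT, hTne, hcard, hor⟩ := grow b C' hne h k
  have hU : ∃ l', T.card + l' ≤ t + 1 ∧ (Finset.univ \ inn b T).card ≤ T.card * l' := by
    rcases hor with hu | ⟨h1, h2⟩
    · exact ⟨0, by omega, by simp [hu]⟩
    · refine ⟨l, by omega, ?_⟩
      rw [Finset.card_sdiff_of_subset (Finset.subset_univ _), Finset.card_fin, h1]
      omega
  obtain ⟨l', hl', hUl⟩ := hU
  obtain ⟨f, hf, hfc⟩ := distrib_fn T hTne _ hUl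
  refine not_ipp b C T (hT.trans hC') (by omega) ?_ f hf ?_ hC
  · intro c hc i
    obtain ⟨d, hd, h1⟩ := h c (hT hc) i
    exact ⟨d, hC' hd, h1⟩
  · intro c hc
    have := hfc c hc
    omega

lemma v_eq (t : ℕ) : ⌊((t : ℝ) / 2 + 1) ^ 2⌋₊ = (t / 2 + 1) * (t - t / 2 + 1) := by
  rw [Nat.floor_eq_iff (by positivity)]
  obtain ⟨m, hm | hm⟩ := Nat.even_or_odd' t
  · have h1 : t / 2 = m := by omega
    have h2 : t - m = m := by omega
    rw [h1, h2, hm]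
    push_cast
    constructor <;> nlinarith
  · have h1 : t / 2 = m := by omega
    have h2 : t - m = m + 1 := by omega
    rw [h1, h2, hm]
    push_cast
    constructor <;> nlinarith

lemma fiber_card (N n : ℕ) (hn : 0 < n) (i : Fin n) :
    Fintype.card {j : Fin N // (⟨j.1 % n, Nat.mod_lt _ hn⟩ : Fin n) = i}
      = N / n + if i.1 < N % n then 1 else 0 := by
  have h := Nat.count_modEq_card N hn i.1
  rw [Nat.mod_eq_of_lt i.2] at h
  rw [← h, Nat.count_eq_card_filter_range, Fintype.card_subtype]
  refine Finset.card_bij (fun j _ => j.1) ?_ ?_ ?_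
  · intro j hj
    simp only [Finset.mem_filter, Finset.mem_univ, true_and, Fin.ext_iff] at hj
    simp [Nat.ModEq, hj, Nat.mod_eq_of_lt i.2]
  · intro j _ j' _ h
    exact Fin.ext h
  · intro m hm
    simp only [Finset.mem_filter, Finset.mem_range, Nat.ModEq, Nat.mod_eq_of_lt i.2] at hm
    exact ⟨⟨m, hm.1⟩, by simp [Fin.ext_iff, hm.2], rfl⟩

/-- Let `t ≥ 2`, `v = ⌊(t/2+1)²⌋` and `r ≡ N (mod v−1)` with `0 ≤ r ≤ v−2`. Then
every `q`-ary `t`-IPP code of length `N` has at most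
`r·q^⌈N/(v−1)⌉ + (v−1−r)·q^⌊N/(v−1)⌋` codewords. -/
theorem stmt_6 (N q t v r : ℕ) (ht : 2 ≤ t)
    (hv : v = ⌊((t : ℝ) / 2 + 1) ^ 2⌋₊) (hr : r = N % (v - 1))
    (C : Finset (Fin N → Fin q)) (hC : IsIPP t C) :
    C.card ≤ r * q ^ (N ⌈/⌉ (v - 1)) + (v - 1 - r) * q ^ (N / (v - 1)) := by
  have hv' := hv.trans (v_eq t)
  have hmul : (t / 2 + 1) * (t - t / 2 + 1) = (t / 2 + 1) * (t - t / 2) + t / 2 + 1 := by ring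
  have hn : 0 < v - 1 := by
    have : 0 < t / 2 := by omega
    omega
  have hb := IsIPP_bound (n := v - 1) (k := t / 2) (l := t - t / 2) (by omega) (by omega)
    (by omega) (fun j : Fin N => ⟨j.1 % (v - 1), Nat.mod_lt _ hn⟩) C hC
  refine hb.trans ?_
  simp only [fiber_card N (v - 1) hn]
  generalize v - 1 = n at *
  have hrn : r < n := hr ▸ Nat.mod_lt _ hn
  rw [← hr, Fin.sum_univ_eq_sum_range (fun i => q ^ (N / n + if i < r then 1 else 0)),
    ← Finset.sum_range_add_sum_Ico _ hrn.le]
  have e1 : ∑ i ∈ Finset.range r, q ^ (N / n + if i < r then 1 else 0)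
      = r * q ^ (N / n + 1) := by
    rw [Finset.sum_congr rfl (g := fun _ => q ^ (N / n + 1))]
    · simp
    · intro i hi
      simp [Finset.mem_range.mp hi]
  have e2 : ∑ i ∈ Finset.Ico r n, q ^ (N / n + if i < r then 1 else 0)
      = (n - r) * q ^ (N / n) := by
    rw [Finset.sum_congr rfl (g := fun _ => q ^ (N / n))]
    · simp
    · intro i hi
      have h1 : ¬ i < r := by have := (Finset.mem_Ico.mp hi).1; omega
      simp [h1]
  rw [e1, e2]
  rcases Nat.eq_zero_or_pos r with h0 | h0
  · simp [h0]
  · have : N ⌈/⌉ n = N / n + 1 := by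
      rw [Nat.ceilDiv_eq_add_pred_div]
      have h1 := Nat.div_add_mod N n
      rw [← hr] at h1
      rw [Nat.div_eq_iff hn]
      have h2 : (N / n + 1) * n = n * (N / n) + n := by ring
      omega
    rw [this]
end

section
/- For every positive integer N there exists a constant c (depending only on N) such that for every alphabet size q, every q-ary 3-traceability code of length N has at most c·q^⌈N/9⌉ codewords; that is, M_TA(N,q,3) ≤ c·q^⌈N/9⌉. -/
/-- `C` is a `t`-traceability (t-TA) code: for every `D ⊆ C` with `|D| ≤ t` and every
`x ∈ desc(D)`, the minimum of `d(x,c)` over `c ∈ D` is strictly smaller than `d(x,y)`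
for every `y ∈ C \ D`. -/
def IsTA {N q : ℕ} (t : ℕ) (C : Finset (Fin N → Fin q)) : Prop :=
  ∀ D : Finset (Fin N → Fin q), D ⊆ C → D.card ≤ t →
    ∀ x ∈ descSet D, ∃ c ∈ D, ∀ y ∈ C \ D, hammingDist x c < hammingDist x y

def fib {N q : ℕ} (C : Finset (Fin N → Fin q)) (x : Fin N → Fin q) (T : Finset (Fin N)) :
    Finset (Fin N → Fin q) := C.filter (fun y => ∀ i ∈ T, y i = x i)

def Heavy {N q : ℕ} (M : ℕ) (C : Finset (Fin N → Fin q)) (x : Fin N → Fin q)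
    (T : Finset (Fin N)) : Prop := M ^ (N - T.card) < (fib C x T).card

theorem mem_fib {N q : ℕ} {C : Finset (Fin N → Fin q)} {x y : Fin N → Fin q}
    {T : Finset (Fin N)} : y ∈ fib C x T ↔ y ∈ C ∧ ∀ i ∈ T, y i = x i := by
  simp [fib]

theorem heavy_ne_univ {N q M : ℕ} {C : Finset (Fin N → Fin q)} {x : Fin N → Fin q}
    {T : Finset (Fin N)} (h : Heavy M C x T) : ∃ i, i ∉ T := by
  by_contra hc
  push Not at hc
  have hT : T = Finset.univ := Finset.eq_univ_iff_forall.2 hc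
  unfold Heavy at h
  have h1 : (fib C x T).card ≤ 1 := by
    rw [Finset.card_le_one]
    intro a ha b hb
    rw [mem_fib] at ha hb
    funext i
    rw [ha.2 i (hc i), hb.2 i (hc i)]
  subst hT
  simp at h
  omega

theorem generic {N q M : ℕ} {C : Finset (Fin N → Fin q)} {y : Fin N → Fin q}
    {T : Finset (Fin N)} (hM : 3 * N ≤ M) (h : Heavy M C y T)
    (hmax : ∀ z T', T ⊂ T' → (∀ i ∈ T, z i = y i) → ¬ Heavy M C z T')
    (Z : Finset (Fin N → Fin q)) (hZ : Z.card ≤ 3) :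
    ∃ y' ∈ C, (∀ i ∈ T, y' i = y i) ∧ ∀ z ∈ Z, ∀ i, i ∉ T → y' i ≠ z i := by
  by_contra hc
  push Not at hc
  obtain ⟨i0, hi0⟩ := heavy_ne_univ h
  have hTlt : T.card < N := by
    have := Finset.card_lt_card (Finset.ssubset_univ_iff.2 (fun e : T = Finset.univ => hi0 (by rw [e]; exact Finset.mem_univ i0)))
    simpa using this
  have hsub : fib C y T ⊆ Z.biUnion fun z => (Finset.univ \ T).biUnion fun i =>
      fib C (fun j => if j ∈ T then y j else z j) (insert i T) := by
    intro w hw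
    rw [mem_fib] at hw
    obtain ⟨z, hz, i, hi, e⟩ := hc w hw.1 hw.2
    simp only [Finset.mem_biUnion]
    refine ⟨z, hz, i, by simpa using hi, ?_⟩
    rw [mem_fib]
    refine ⟨hw.1, ?_⟩
    intro j hj
    by_cases hjT : j ∈ T
    · simp [hjT, hw.2 j hjT]
    · have : j = i := by
        rcases Finset.mem_insert.1 hj with h | h
        · exact h
        · exact absurd h hjT
      subst this
      simp [hi, e]
  have h1 := Finset.card_le_card hsub
  have h2 : (Z.biUnion fun z => (Finset.univ \ T).biUnion fun i =>
      fib C (fun j => if j ∈ T then y j else z j) (insert i T)).card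
      ≤ Z.card * (N * M ^ (N - (T.card + 1))) := by
    apply Finset.card_biUnion_le_card_mul
    intro z hz
    refine le_trans (Finset.card_biUnion_le_card_mul _ _ (M ^ (N - (T.card + 1))) ?_) ?_
    · intro i hi
      have hi : i ∉ T := by simpa using hi
      have := hmax (fun j => if j ∈ T then y j else z j) (insert i T)
        (Finset.ssubset_insert hi) (by intro j hj; simp [hj])
      unfold Heavy at this
      rw [Finset.card_insert_of_notMem hi] at this
      omega
    · apply Nat.mul_le_mul_right
      simpa using Finset.card_le_univ (Finset.univ \ T)
  have h3 : M ^ (N - T.card) = M * M ^ (N - (T.card + 1)) := by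
    rw [← pow_succ']
    congr 1
    omega
  unfold Heavy at h
  have h4 : Z.card * (N * M ^ (N - (T.card + 1))) ≤ M * M ^ (N - (T.card + 1)) := by
    rw [← mul_assoc]
    apply Nat.mul_le_mul_right
    exact le_trans (Nat.mul_le_mul_right _ hZ) hM
  omega

theorem extend_heavy {N q M : ℕ} {C : Finset (Fin N → Fin q)} {y : Fin N → Fin q}
    {S : Finset (Fin N)} (h : Heavy M C y S) :
    ∃ y0 T, S ⊆ T ∧ (∀ i ∈ S, y0 i = y i) ∧ Heavy M C y0 T ∧
      (∀ z T', T ⊂ T' → (∀ i ∈ T, z i = y0 i) → ¬ Heavy M C z T') := by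
  classical
  let P : Finset (Finset (Fin N)) := Finset.univ.filter fun T =>
    S ⊆ T ∧ ∃ y0, (∀ i ∈ S, y0 i = y i) ∧ Heavy M C y0 T
  have hP : P.Nonempty := ⟨S, by simp only [P, Finset.mem_filter]; exact ⟨Finset.mem_univ _, le_rfl, y, fun _ _ => rfl, h⟩⟩
  obtain ⟨T, hT, hmax⟩ := Finset.exists_max_image P Finset.card hP
  simp only [P, Finset.mem_filter] at hT
  obtain ⟨-, hST, y0, hy0, hh⟩ := hT
  refine ⟨y0, T, hST, hy0, hh, ?_⟩
  intro z T' hTT hz hH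
  have := hmax T' (by
    simp only [P, Finset.mem_filter]
    refine ⟨Finset.mem_univ _, hST.trans hTT.1, z, ?_, hH⟩
    intro i hi
    rw [hz i (hST hi), hy0 i hi])
  have := Finset.card_lt_card hTT
  omega

theorem prune_s7 {N q : ℕ} (K k : ℕ) (C : Finset (Fin N → Fin q))
    (hC : 2 ^ N * K * q ^ k < C.card) :
    ∃ C' ⊆ C, C'.Nonempty ∧ ∀ x ∈ C', ∀ S : Finset (Fin N), S.card = k →
      K < (fib C' x S).card := by
  classical
  let Φ : Finset (Fin N → Fin q) → ℕ := fun D =>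
    ∑ S ∈ Finset.powersetCard k (Finset.univ : Finset (Fin N)),
      (D.image (fun x => fun i : S => x i)).card
  have hΦ : K * Φ C < C.card := by
    refine lt_of_le_of_lt ?_ hC
    have : Φ C ≤ 2 ^ N * q ^ k := by
      calc Φ C ≤ ∑ S ∈ Finset.powersetCard k (Finset.univ : Finset (Fin N)), q ^ k := by
            apply Finset.sum_le_sum
            intro S hS
            refine le_trans (Finset.card_le_univ _) ?_
            simp [(Finset.mem_powersetCard.1 hS).2]
        _ ≤ 2 ^ N * q ^ k := by
            simp only [Finset.sum_const, Finset.card_powersetCard, smul_eq_mul, Finset.card_univ, Fintype.card_fin]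
            exact Nat.mul_le_mul_right _ (Nat.choose_le_two_pow _ _)
    calc K * Φ C ≤ K * (2 ^ N * q ^ k) := Nat.mul_le_mul_left _ this
      _ = _ := by ring
  obtain ⟨D, hD, hmin⟩ := Finset.exists_min_image
    (C.powerset.filter fun D => K * Φ D < D.card) Finset.card
    ⟨C, by simp only [Finset.mem_filter, Finset.mem_powerset]; exact ⟨le_rfl, hΦ⟩⟩
  simp only [Finset.mem_filter, Finset.mem_powerset] at hD
  refine ⟨D, hD.1, Finset.card_pos.1 (by omega), ?_⟩
  intro x hx S hS
  by_contra hc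
  push Not at hc
  have hxf : x ∈ fib D x S := mem_fib.2 ⟨hx, fun _ _ => rfl⟩
  have hfD : fib D x S ⊆ D := Finset.filter_subset _ _
  have hcard : (D \ fib D x S).card + (fib D x S).card = D.card :=
    Finset.card_sdiff_add_card_eq_card hfD
  have hpos : 0 < (fib D x S).card := Finset.card_pos.2 ⟨x, hxf⟩
  have hlt : Φ (D \ fib D x S) < Φ D := by
    apply Finset.sum_lt_sum
    · intro S' _
      exact Finset.card_le_card (Finset.image_subset_image Finset.sdiff_subset)
    · refine ⟨S, by simp [hS], ?_⟩
      apply Finset.card_lt_card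
      rw [Finset.ssubset_iff_of_subset (Finset.image_subset_image Finset.sdiff_subset)]
      refine ⟨fun i : S => x i, Finset.mem_image_of_mem _ hx, ?_⟩
      intro hm
      obtain ⟨y, hy, e⟩ := Finset.mem_image.1 hm
      rw [Finset.mem_sdiff] at hy
      apply hy.2
      rw [mem_fib]
      exact ⟨hy.1, fun i hi => congrFun e ⟨i, hi⟩⟩
  have h1 : K * Φ (D \ fib D x S) + K ≤ K * Φ D := by
    have := Nat.mul_le_mul_left K (Nat.succ_le_of_lt hlt)
    rw [Nat.succ_eq_add_one, mul_add, mul_one] at this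
    exact this
  have := hmin (D \ fib D x S) (by
    simp only [Finset.mem_filter, Finset.mem_powerset]
    refine ⟨Finset.sdiff_subset.trans hD.1, by omega⟩)
  omega

/-- Splitting a finite set into three pieces of bounded sizes. -/
theorem split3 {α : Type*} [DecidableEq α] (R : Finset α) (p q r : ℕ) (h : R.card ≤ p + q + r) :
    ∃ R1 R2 : Finset α, R1 ⊆ R ∧ R2 ⊆ R ∧ Disjoint R1 R2 ∧ R1.card ≤ p ∧ R2.card ≤ q ∧
      (R \ (R1 ∪ R2)).card ≤ r := by
  obtain ⟨R1, h1, c1⟩ := Finset.exists_subset_card_eq (min_le_left R.card p)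
  have e1 := Finset.card_sdiff_add_card_eq_card h1
  obtain ⟨R2, h2, c2⟩ := Finset.exists_subset_card_eq (min_le_left (R \ R1).card q)
  have e2 := Finset.card_sdiff_add_card_eq_card h2
  refine ⟨R1, R2, h1, h2.trans Finset.sdiff_subset, ?_, by omega, by omega, ?_⟩
  · exact Finset.disjoint_of_subset_right h2 Finset.disjoint_sdiff
  · have : R \ (R1 ∪ R2) = (R \ R1) \ R2 := by
      ext i; simp; tauto
    rw [this]
    omega

theorem ham_agree {N q : ℕ} (x y : Fin N → Fin q) :
    hammingDist x y + (Finset.univ.filter fun i => x i = y i).card = N := by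
  unfold hammingDist
  rw [add_comm, Finset.card_filter_add_card_filter_not]
  simp

theorem final {N q m : ℕ} (C : Finset (Fin N → Fin q)) (hTA : IsTA 3 C)
    (x a b c : Fin N → Fin q) (hx : x ∈ C) (ha : a ∈ C) (hb : b ∈ C) (hc : c ∈ C)
    (hxa : x ≠ a) (hxb : x ≠ b) (hxc : x ≠ c)
    (A B E P : Finset (Fin N))
    (hA : ∀ i, i ∈ A ↔ a i = x i) (hB : ∀ i, i ∈ B ↔ b i = x i) (hE : ∀ i, i ∈ E ↔ c i = x i)
    (hP : ∀ i, i ∈ P ↔ i ∉ A ∪ B ∪ E ∧ b i = c i)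
    (hab : ∀ i, i ∉ A → a i ≠ b i) (hac : ∀ i, i ∉ A → a i ≠ c i)
    (h1 : A.card ≤ m) (h2 : B.card + P.card ≤ m) (h3 : E.card + P.card ≤ m)
    (hm : m ≤ (A ∪ B ∪ E).card)
    (hU : N + 3 * m ≤ 4 * (A ∪ B ∪ E).card) : False := by
  classical
  set U := A ∪ B ∪ E with hUdef
  set R := Finset.univ \ (U ∪ P) with hR
  have hUP : Disjoint U P := by
    rw [Finset.disjoint_right]
    intro i hi
    exact ((hP i).1 hi).1
  have hRc : R.card + (U.card + P.card) = N := by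
    rw [← Finset.card_union_of_disjoint hUP]
    have := Finset.card_sdiff_add_card_eq_card (Finset.subset_univ (U ∪ P))
    simpa using this
  obtain ⟨R1, R2, hR1, hR2, hd, c1, c2, c3⟩ := split3 R (U.card - A.card)
    (U.card - B.card - P.card) (U.card - E.card - P.card) (by omega)
  let w : Fin N → Fin q := fun i => if i ∈ U then x i else if i ∈ P then b i else
    if i ∈ R1 then a i else if i ∈ R2 then b i else c i
  have hmR : ∀ i, i ∈ R ↔ i ∉ U ∧ i ∉ P := by intro i; simp [R]
  have hmU : ∀ i, i ∈ U ↔ i ∈ A ∨ i ∈ B ∨ i ∈ E := by intro i; simp [U]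
  have hdesc : w ∈ descSet ({a, b, c} : Finset _) := by
    intro i
    simp only [Finset.mem_insert, Finset.mem_singleton, exists_eq_or_imp, exists_eq_left, w]
    have := hmU i
    have := hA i
    have := hB i
    have := hE i
    split_ifs <;> grind
  obtain ⟨d, hd', hlt⟩ := hTA {a, b, c} (by
    intro z hz
    simp only [Finset.mem_insert, Finset.mem_singleton] at hz
    rcases hz with rfl | rfl | rfl <;> assumption) Finset.card_le_three w hdesc
  have hlt := hlt x (by simp [hx, hxa, hxb, hxc])
  have e1 := ham_agree w x
  have e2 := ham_agree w d
  have g1 : U.card ≤ (Finset.univ.filter fun i => w i = x i).card := by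
    apply Finset.card_le_card
    intro i hi
    simp [w, hi]
  have g2 : (Finset.univ.filter fun i => w i = d i).card ≤ U.card := by
    simp only [Finset.mem_insert, Finset.mem_singleton] at hd'
    rcases hd' with rfl | rfl | rfl
    · have : (Finset.univ.filter fun i => w i = d i) ⊆ A ∪ R1 := by
        intro i hi
        simp only [Finset.mem_filter, Finset.mem_univ, true_and, w] at hi
        rw [Finset.mem_union]
        have := hA i; have := hP i; have := hab i; have := hac i
        have := hmU i
        split_ifs at hi <;> grind
      have := Finset.card_le_card this
      have := Finset.card_union_le A R1
      omega
    · have : (Finset.univ.filter fun i => w i = d i) ⊆ (B ∪ P) ∪ R2 := by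
        intro i hi
        simp only [Finset.mem_filter, Finset.mem_univ, true_and, w] at hi
        simp only [Finset.mem_union]
        have := hB i; have := hP i; have := hab i; have := hac i
        have := hmU i
        split_ifs at hi <;> grind
      have := Finset.card_le_card this
      have := Finset.card_union_le (B ∪ P) R2
      have := Finset.card_union_le B P
      omega
    · have : (Finset.univ.filter fun i => w i = d i) ⊆ (E ∪ P) ∪ (R \ (R1 ∪ R2)) := by
        intro i hi
        simp only [Finset.mem_filter, Finset.mem_univ, true_and, w] at hi
        simp only [Finset.mem_union, Finset.mem_sdiff]
        have := hE i; have := hP i; have := hab i; have := hac i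
        have := hmU i; have := hmR i
        split_ifs at hi <;> grind
      have := Finset.card_le_card this
      have := Finset.card_union_le (E ∪ P) (R \ (R1 ∪ R2))
      have := Finset.card_union_le E P
      omega
  omega

/-- A set of size `k` covering as much as possible outside `V`. -/
theorem pick {N k : ℕ} (hk : k ≤ N) (V : Finset (Fin N)) :
    ∃ S : Finset (Fin N), S.card = k ∧ ∀ W, V ⊆ W → S ⊆ W →
      W = Finset.univ ∨ V.card + k ≤ W.card := by
  by_cases h : k ≤ (Finset.univ \ V).card
  · obtain ⟨S, hS, hc⟩ := Finset.exists_subset_card_eq h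
    refine ⟨S, hc, fun W hV hW => Or.inr ?_⟩
    rw [← hc, ← Finset.card_union_of_disjoint]
    · exact Finset.card_le_card (Finset.union_subset hV hW)
    · exact Finset.disjoint_of_subset_right hS Finset.disjoint_sdiff
  · obtain ⟨S, hS, -, hc⟩ := Finset.exists_subsuperset_card_eq (Finset.subset_univ (Finset.univ \ V))
      (by omega : (Finset.univ \ V).card ≤ k) (by simpa using hk)
    refine ⟨S, hc, fun W hV hW => Or.inl ?_⟩
    rw [Finset.eq_univ_iff_forall]
    intro i
    by_cases hi : i ∈ V
    · exact hV hi
    · exact hW (hS (by simp [hi]))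

theorem core {N q k : ℕ} (hN : 1 ≤ N) (hk : k ≤ N) (h9 : N ≤ 9 * k)
    (C0 C : Finset (Fin N → Fin q)) (hTA : IsTA 3 C0) (hsub : C ⊆ C0) (hne : C.Nonempty)
    (hC : ∀ x ∈ C, ∀ S : Finset (Fin N), S.card = k → (3 * N) ^ N < (fib C x S).card) :
    False := by
  classical
  have hheavy : ∀ x ∈ C, ∀ S : Finset (Fin N), S.card = k → Heavy (3 * N) C x S := by
    intro x hx S hS
    exact lt_of_le_of_lt (Nat.pow_le_pow_right (by omega) (Nat.sub_le _ _)) (hC x hx S hS)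
  -- the globally largest heavy set
  obtain ⟨S0, hS0, -⟩ := pick hk (∅ : Finset (Fin N))
  obtain ⟨x0, hx0⟩ := hne
  let Q : Finset (Finset (Fin N)) := Finset.univ.filter fun T => ∃ y, Heavy (3 * N) C y T
  have hQ : ∀ T, T ∈ Q ↔ ∃ y, Heavy (3 * N) C y T := by intro T; simp [Q]
  have hS0Q : S0 ∈ Q := (hQ _).2 ⟨x0, hheavy x0 hx0 S0 hS0⟩
  obtain ⟨A, hAQ, hAmax⟩ := Finset.exists_max_image Q Finset.card ⟨S0, hS0Q⟩
  have hkA : k ≤ A.card := hS0 ▸ hAmax S0 hS0Q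
  obtain ⟨x1, hx1⟩ := (hQ A).1 hAQ
  have hmaxA : ∀ z T', A ⊂ T' → (∀ i ∈ A, z i = x1 i) → ¬ Heavy (3 * N) C z T' := by
    intro z T' hT _ hH
    have := hAmax T' ((hQ _).2 ⟨z, hH⟩)
    have := Finset.card_lt_card hT
    omega
  obtain ⟨x, hx, hxA, -⟩ := generic le_rfl hx1 hmaxA ∅ (by simp)
  -- b
  obtain ⟨S1, hS1, hS1W⟩ := pick hk A
  obtain ⟨b0, TB, hTB, hb0, hHB, hmaxB⟩ := extend_heavy (hheavy x hx S1 hS1)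
  have hTBm : TB.card ≤ A.card := hAmax TB ((hQ _).2 ⟨_, hHB⟩)
  let B : Finset (Fin N) := TB.filter fun i => b0 i = x i
  -- c
  obtain ⟨S2, hS2, hS2W⟩ := pick hk (A ∪ B)
  obtain ⟨c0, TC, hTC, hc0, hHC, hmaxC⟩ := extend_heavy (hheavy x hx S2 hS2)
  have hTCm : TC.card ≤ A.card := hAmax TC ((hQ _).2 ⟨_, hHC⟩)
  obtain ⟨c, hcC, hcT, hcZ⟩ := generic le_rfl hHC hmaxC {x, b0}
    (Finset.card_le_two.trans (by norm_num))
  obtain ⟨b, hbC, hbT, hbZ⟩ := generic le_rfl hHB hmaxB {x, c}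
    (Finset.card_le_two.trans (by norm_num))
  obtain ⟨a, haC, haT, haZ⟩ := generic le_rfl hx1 hmaxA {x, b, c} Finset.card_le_three
  simp only [Finset.mem_insert, Finset.mem_singleton, forall_eq_or_imp, forall_eq] at hcZ hbZ haZ
  let E : Finset (Fin N) := TC.filter fun i => c0 i = x i
  let P : Finset (Fin N) := Finset.univ.filter fun i => i ∉ A ∪ B ∪ E ∧ b i = c i
  have hA : ∀ i, i ∈ A ↔ a i = x i := by
    intro i
    refine ⟨fun h => by rw [haT i h, hxA i h], fun h => ?_⟩
    by_contra hi
    exact haZ.1 i hi h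
  have hB : ∀ i, i ∈ B ↔ b i = x i := by
    intro i
    simp only [B, Finset.mem_filter]
    have := hbT i; have := hbZ.1 i
    grind
  have hE : ∀ i, i ∈ E ↔ c i = x i := by
    intro i
    simp only [E, Finset.mem_filter]
    have := hcT i; have := hcZ.1 i
    grind
  have hP : ∀ i, i ∈ P ↔ i ∉ A ∪ B ∪ E ∧ b i = c i := by intro i; simp [P]
  obtain ⟨ia, hia⟩ := heavy_ne_univ hx1
  obtain ⟨ib, hib⟩ := heavy_ne_univ hHB
  obtain ⟨ic, hic⟩ := heavy_ne_univ hHC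
  have hPTB : P ⊆ TB := by
    intro i hi
    by_contra h
    exact hbZ.2 i h ((hP i).1 hi).2
  have hPTC : P ⊆ TC := by
    intro i hi
    by_contra h
    apply hcZ.2 i h
    rw [← ((hP i).1 hi).2, hbT i (hPTB hi)]
  have hBP : B.card + P.card ≤ TB.card := by
    rw [← Finset.card_union_of_disjoint]
    · exact Finset.card_le_card (Finset.union_subset (Finset.filter_subset _ _) hPTB)
    · rw [Finset.disjoint_right]
      intro i hi hiB
      exact ((hP i).1 hi).1 (by simp [hiB])
  have hEP : E.card + P.card ≤ TC.card := by
    rw [← Finset.card_union_of_disjoint]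
    · exact Finset.card_le_card (Finset.union_subset (Finset.filter_subset _ _) hPTC)
    · rw [Finset.disjoint_right]
      intro i hi hiB
      exact ((hP i).1 hi).1 (by simp [hiB])
  have hS1B : S1 ⊆ B := by
    intro i hi
    simp only [B, Finset.mem_filter]
    exact ⟨hTB hi, hb0 i hi⟩
  have hS2E : S2 ⊆ E := by
    intro i hi
    simp only [E, Finset.mem_filter]
    exact ⟨hTC hi, hc0 i hi⟩
  have hAU : A.card ≤ (A ∪ B ∪ E).card := Finset.card_le_card (by
    rw [Finset.union_assoc]; exact Finset.subset_union_left)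
  have hAN : A.card ≤ N := by simpa using Finset.card_le_univ A
  have hbig : N + 3 * A.card ≤ 4 * (A ∪ B ∪ E).card := by
    have u1 := hS1W (A ∪ B) Finset.subset_union_left (hS1B.trans Finset.subset_union_right)
    have u2 := hS2W (A ∪ B ∪ E) Finset.subset_union_left (hS2E.trans Finset.subset_union_right)
    rcases u2 with u2 | u2
    · rw [u2]; simp; omega
    · rcases u1 with u1 | u1
      · have := Finset.card_le_card (Finset.subset_union_left : A ∪ B ⊆ A ∪ B ∪ E)
        have u3 : (A ∪ B).card = N := by rw [u1]; simp
        omega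
      · omega
  exact final C0 hTA x a b c (hsub hx) (hsub haC) (hsub hbC) (hsub hcC)
    (fun e => haZ.1 ia hia (by rw [e])) (fun e => hbZ.1 ib hib (by rw [e]))
    (fun e => hcZ.1 ic hic (by rw [e])) A B E P hA hB hE hP haZ.2.1 haZ.2.2
    le_rfl (hBP.trans hTBm) (hEP.trans hTCm) hAU hbig

/-- For every positive integer `N` there is a constant `c` (depending only on `N`)
such that for every alphabet size `q`, every `q`-ary 3-traceability code of length
`N` has at most `c·q^⌈N/9⌉` codewords. -/
theorem stmt_7 (N : ℕ) (hN : 1 ≤ N) :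
    ∃ c : ℕ, ∀ q : ℕ, ∀ C : Finset (Fin N → Fin q),
      IsTA 3 C → C.card ≤ c * q ^ (N ⌈/⌉ 9) := by
  refine ⟨2 ^ N * (3 * N) ^ N, ?_⟩
  intro q C hTA
  by_contra h
  push Not at h
  obtain ⟨C', hsub, hne, hC'⟩ := prune_s7 _ _ C h
  have e : N ⌈/⌉ 9 = (N + 9 - 1) / 9 := Nat.ceilDiv_eq_add_pred_div _ _
  refine core hN ?_ ?_ C C' hTA hsub hne hC' <;> omega
end

section
/- Let t be a positive integer, N = 9t, and let C be a q-ary 3-traceability code of length N with at least three codewords and minimum distance d(C) ≤ 2t. Let C' = {x ∈ C : for every t-subset I ⊆ [N], at least two codewords of C agree with x on all coordinates of I}. Then |C \ C'| ≤ binom(N,t)·q^t, and any two distinct codewords of C' are at Hamming distance strictly greater than d(C). -/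
/-- The minimum Hamming distance of a code (junk value `0` if `|C| ≤ 1`). -/
noncomputable def minDist {N q : ℕ} (C : Finset (Fin N → Fin q)) : ℕ :=
  sInf {d : ℕ | ∃ x ∈ C, ∃ y ∈ C, x ≠ y ∧ hammingDist x y = d}

/-- Let `t ≥ 1`, `N = 9t`, and let `C` be a `q`-ary 3-traceability code of length
`N` with at least three codewords and minimum distance at most `2t`. Let `C'` consist
of those `x ∈ C` such that for every `t`-subset `I` of coordinates at least two
codewords of `C` agree with `x` on all of `I`. Then `|C \ C'| ≤ C(N,t)·q^t`, and any
two distinct codewords of `C'` are at Hamming distance strictly greater than `d(C)`. -/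
theorem stmt_9 (t : ℕ) (ht : 1 ≤ t) (N q : ℕ) (hN : N = 9 * t)
    (C : Finset (Fin N → Fin q)) (hC : IsTA 3 C) (h3 : 3 ≤ C.card)
    (hd : minDist C ≤ 2 * t)
    (C' : Finset (Fin N → Fin q))
    (hC' : C' = C.filter fun x => ∀ I : Finset (Fin N), I.card = t →
      2 ≤ (C.filter fun y => ∀ i ∈ I, y i = x i).card) :
    (C \ C').card ≤ N.choose t * q ^ t ∧
      ∀ x ∈ C', ∀ y ∈ C', x ≠ y → minDist C < hammingDist x y := by
  subst hC'
  constructor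
  · have hsub : (C \ C.filter fun x => ∀ I : Finset (Fin N), I.card = t →
        2 ≤ (C.filter fun y => ∀ i ∈ I, y i = x i).card) ⊆
        (Finset.powersetCard t (Finset.univ : Finset (Fin N))).biUnion fun I =>
          C.filter fun x => ∀ y ∈ C, (∀ i ∈ I, y i = x i) → y = x := by
      intro x hx
      simp only [Finset.mem_sdiff, Finset.mem_filter, not_and, not_forall] at hx
      obtain ⟨hxC, hx⟩ := hx
      obtain ⟨I, hI, hlt⟩ := hx hxC
      simp only [Finset.mem_biUnion, Finset.mem_powersetCard, Finset.mem_filter]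
      refine ⟨I, ⟨Finset.subset_univ _, hI⟩, hxC, ?_⟩
      intro y hy hyx
      have h1 : (C.filter fun y => ∀ i ∈ I, y i = x i).card ≤ 1 := by omega
      rw [Finset.card_le_one] at h1
      exact h1 y (by simp [hy]; exact hyx) x (by simp [hxC])
    refine (Finset.card_le_card hsub).trans ?_
    refine (Finset.card_biUnion_le_card_mul _ _ (q ^ t) ?_).trans ?_
    · intro I hI
      have hI' := (Finset.mem_powersetCard.1 hI).2
      have h := Finset.card_le_card_of_injOn
        (s := C.filter fun x => ∀ y ∈ C, (∀ i ∈ I, y i = x i) → y = x)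
        (t := (Finset.univ : Finset (I → Fin q))) (fun x i => x i)
        (fun _ _ => by simp) (by
          intro a ha b hb hab
          simp only [Finset.coe_filter, Set.mem_setOf_eq] at ha hb
          exact hb.2 a ha.1 (fun i hi => congrFun hab ⟨i, hi⟩))
      simpa [hI'] using h
    · simp
  · intro x hx y hy hxy
    by_contra hlt
    have hle : hammingDist x y ≤ 2 * t := by omega
    simp only [Finset.mem_filter] at hx hy
    obtain ⟨hxC, hx⟩ := hx
    have key : ∀ S : Finset (Fin N), S.card ≤ t → ∃ z ∈ C, z ≠ x ∧ ∀ i ∈ S, z i = x i := by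
      intro S hS
      obtain ⟨I, hSI, hI⟩ := Finset.exists_superset_card_eq hS (by simp; omega)
      obtain ⟨z, hz, hzx⟩ := Finset.exists_mem_ne (hx I hI) x
      simp only [Finset.mem_filter] at hz
      exact ⟨z, hz.1, hzx, fun i hi => hz.2 i (hSI hi)⟩
    set A := Finset.univ.filter fun i => x i ≠ y i with hA
    have hAc : A.card ≤ 2 * t := hle
    obtain ⟨A1, hA1, hA1c⟩ := Finset.exists_subset_card_eq (s := A) (n := min t A.card)
      (min_le_right _ _)
    have h2 : (A \ A1).card ≤ t := by
      rw [Finset.card_sdiff_of_subset hA1]; omega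
    obtain ⟨z, hzC, hzx, hz⟩ := key A1 (by omega)
    obtain ⟨u, huC, hux, hu⟩ := key (A \ A1) h2
    obtain ⟨c, hc, h⟩ := hC {y, z, u} (by
      intro w hw
      simp only [Finset.mem_insert, Finset.mem_singleton] at hw
      rcases hw with rfl | rfl | rfl
      exacts [hy.1, hzC, huC]) Finset.card_le_three x (by
      intro i
      by_cases h1 : i ∈ A1
      · exact ⟨z, by simp, (hz i h1).symm⟩
      by_cases h2 : i ∈ A
      · exact ⟨u, by simp, (hu i (by simp [h1, h2])).symm⟩
      · exact ⟨y, by simp, by simpa [hA] using h2⟩)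
    have := h x (by simp [hxC, hxy, hzx.symm, hux.symm])
    simp at this
end

section
/- Let C be a code of length N over an alphabet of size q, and let V₁, …, V_m be a partition of the coordinate set [N] into m nonempty parts. If |C| > Σ_{i=1}^m q^{|V_i|}, then there exists a nonempty subset Ĉ ⊆ C such that for every codeword x ∈ Ĉ and every 1 ≤ i ≤ m there exists a codeword y ∈ Ĉ with y ≠ x and y agreeing with x on all coordinates of V_i (i.e., no codeword of Ĉ has a private pattern with support set V_i). -/
theorem stmt_10_aux {N q m : ℕ} (V : Fin m → Finset (Fin N)) (n : ℕ) :
    ∀ C : Finset (Fin N → Fin q), C.card = n →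
    ∑ i : Fin m, (C.image (fun x (j : V i) => x j)).card < C.card →
    ∃ Chat ⊆ C, Chat.Nonempty ∧
      ∀ x ∈ Chat, ∀ i : Fin m, ∃ y ∈ Chat, y ≠ x ∧ ∀ j ∈ V i, y j = x j := by
  induction n with
  | zero => intro C h1 h2; omega
  | succ n ih =>
    intro C h1 h2
    by_cases h : ∀ x ∈ C, ∀ i : Fin m, ∃ y ∈ C, y ≠ x ∧ ∀ j ∈ V i, y j = x j
    · exact ⟨C, Finset.Subset.refl _, Finset.card_pos.mp (by omega), h⟩
    · push Not at h
      obtain ⟨x, hx, i, hi⟩ := h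
      have hc := Finset.card_erase_of_mem hx
      have hlt : ∑ i : Fin m, ((C.erase x).image (fun x (j : V i) => x j)).card
          < ∑ i : Fin m, (C.image (fun x (j : V i) => x j)).card := by
        apply Finset.sum_lt_sum
        · intro k _
          exact Finset.card_le_card (Finset.image_subset_image (Finset.erase_subset _ _))
        · refine ⟨i, Finset.mem_univ _, Finset.card_lt_card ?_⟩
          refine (Finset.ssubset_iff_of_subset
            (Finset.image_subset_image (Finset.erase_subset _ _))).mpr
            ⟨_, Finset.mem_image_of_mem _ hx, ?_⟩
          intro hm
          obtain ⟨y, hy, hyx⟩ := Finset.mem_image.mp hm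
          obtain ⟨j, hj, hne⟩ := hi y (Finset.mem_of_mem_erase hy) (Finset.ne_of_mem_erase hy)
          exact hne (congrFun hyx ⟨j, hj⟩)
      obtain ⟨D, hD, h⟩ := ih (C.erase x) (by omega) (by omega)
      exact ⟨D, hD.trans (Finset.erase_subset _ _), h⟩


/-- Let `C` be a code of length `N` over an alphabet of size `q` and let
`V 0, …, V (m-1)` be a partition of the coordinate set into `m` nonempty parts. If
`|C| > Σᵢ q^{|Vᵢ|}`, then there is a nonempty subset `Ĉ ⊆ C` in which no codeword has
a private pattern with support any part `Vᵢ`: every `x ∈ Ĉ` agrees on all of `Vᵢ`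
with some other codeword `y ∈ Ĉ`. -/
theorem stmt_10 (N q m : ℕ) (V : Fin m → Finset (Fin N))
    (hne : ∀ i, (V i).Nonempty)
    (hdisj : ∀ i j, i ≠ j → Disjoint (V i) (V j))
    (hcover : ∀ j : Fin N, ∃ i, j ∈ V i)
    (C : Finset (Fin N → Fin q))
    (hcard : ∑ i : Fin m, q ^ (V i).card < C.card) :
    ∃ Chat ⊆ C, Chat.Nonempty ∧
      ∀ x ∈ Chat, ∀ i : Fin m, ∃ y ∈ Chat, y ≠ x ∧ ∀ j ∈ V i, y j = x j := by
  refine stmt_10_aux V C.card C rfl (lt_of_le_of_lt (Finset.sum_le_sum fun i _ => ?_) hcard)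
  refine (Finset.card_le_univ _).trans ?_
  simp
end

section
/- Let t ≥ 2, N ≥ 1, and let r ∈ {0, …, t−1} be the integer with r ≡ N (mod t). Then every q-ary t-frameproof code of length N has at most max{ q^⌈N/t⌉, r·(q^⌈N/t⌉ − 1) + (t−r)·(q^⌊N/t⌋ − 1) } codewords; that is, M_FP(N,q,t) ≤ max{ q^⌈N/t⌉, r(q^⌈N/t⌉−1) + (t−r)(q^⌊N/t⌋−1) }. -/
theorem blk_card (N t j : ℕ) (ht : 0 < t) (hj : j < t) :
    Fintype.card {i : Fin N // i.val % t = j} = N / t + if j < N % t then 1 else 0 := by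
  have h := Nat.count_modEq_card N ht j
  rw [Nat.mod_eq_of_lt hj] at h
  rw [← h, Nat.count_eq_card_filter_range, Fintype.card_subtype]
  apply Finset.card_bij (fun (i : Fin N) _ => i.val)
  · intro a ha
    simp only [Finset.mem_filter, Finset.mem_univ, true_and] at ha
    simp [Nat.ModEq, ha, Nat.mod_eq_of_lt hj]
  · intro a _ b _ h
    exact Fin.ext h
  · intro b hb
    simp only [Finset.mem_filter, Finset.mem_range, Nat.ModEq, Nat.mod_eq_of_lt hj] at hb
    exact ⟨⟨b, hb.1⟩, by simp [hb.2], rfl⟩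

theorem sum_blk (t r a b : ℕ) (hr : r ≤ t) :
    ∑ j ∈ Finset.range t, (if j < r then a else b) = r * a + (t - r) * b := by
  obtain ⟨s, rfl⟩ := Nat.exists_eq_add_of_le hr
  rw [Finset.sum_range_add]
  rw [Finset.sum_congr rfl (g := fun _ => a) (fun x hx => by simp at hx; simp [hx])]
  simp

theorem stmt_13 (N q t r : ℕ) (ht : 2 ≤ t) (hN : 1 ≤ N) (hr : r = N % t)
    (C : Finset (Fin N → Fin q)) (hC : IsFrameproof t C) :
    C.card ≤ max (q ^ (N ⌈/⌉ t))
      (r * (q ^ (N ⌈/⌉ t) - 1) + (t - r) * (q ^ (N / t) - 1)) := by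
  classical
  have ht0 : 0 < t := by omega
  have hrt : r < t := hr ▸ Nat.mod_lt _ ht0
  have hceil : N ⌈/⌉ t = N / t + if 0 < r then 1 else 0 := by
    rw [Nat.ceilDiv_eq_add_pred_div]
    have h1 := Nat.div_add_mod N t
    rw [← hr] at h1
    split_ifs with h
    · rw [show N + t - 1 = (r - 1) + t * (N / t + 1) by rw [mul_add]; omega,
        Nat.add_mul_div_left _ _ ht0, Nat.div_eq_of_lt (by omega)]
      omega
    · rw [show N + t - 1 = (t - 1) + t * (N / t) by omega,
        Nat.add_mul_div_left _ _ ht0, Nat.div_eq_of_lt (by omega)]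
      omega
  let U : ℕ → Finset (Fin N → Fin q) := fun j =>
    C.filter (fun c => ∀ d ∈ C, (∀ i : Fin N, i.val % t = j → c i = d i) → d = c)
  let p : (j : ℕ) → (Fin N → Fin q) → ({i : Fin N // i.val % t = j} → Fin q) :=
    fun j c i => c i.1
  have hinj : ∀ j, Set.InjOn (p j) (U j) := by
    intro j c hc d hd h
    simp only [U, Finset.coe_filter, Set.mem_ofPred_eq] at hc hd
    exact (hc.2 d hd.1 (fun i hi => congrFun h ⟨i, hi⟩)).symm
  have hcov : C ⊆ (Finset.range t).biUnion U := by
    intro c hc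
    by_contra hn
    have hne : ∀ j : ℕ, j < t → ∃ d ∈ C, (∀ i : Fin N, i.val % t = j → c i = d i) ∧ d ≠ c := by
      intro j hj
      by_contra hh
      push Not at hh
      apply hn
      simp only [Finset.mem_biUnion, Finset.mem_range, U, Finset.mem_filter]
      exact ⟨j, hj, hc, hh⟩
    have : Nonempty (Fin N → Fin q) := ⟨c⟩
    choose! f hf using hne
    have hD := hC ((Finset.range t).image f)
      (by
        intro x hx
        simp only [Finset.mem_image, Finset.mem_range] at hx
        obtain ⟨j, hj, rfl⟩ := hx
        exact (hf j hj).1)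
      (Finset.card_image_le.trans (by simp))
    have hcD : c ∈ (((Finset.range t).image f : Finset _) : Set (Fin N → Fin q)) := by
      rw [← hD]
      refine ⟨fun i => ⟨f (i.val % t), ?_, ?_⟩, hc⟩
      · exact Finset.mem_image_of_mem f (Finset.mem_range.2 (Nat.mod_lt _ ht0))
      · exact (hf _ (Nat.mod_lt _ ht0)).2.1 i rfl
    rw [Finset.mem_coe, Finset.mem_image] at hcD
    obtain ⟨j, hj, h⟩ := hcD
    exact (hf j (Finset.mem_range.1 hj)).2.2 h
  have hle : ∀ j < t, (U j).card ≤ q ^ (N / t + if j < r then 1 else 0) := by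
    intro j hj
    rw [← Finset.card_image_of_injOn (hinj j)]
    refine (Finset.card_le_univ _).trans ?_
    rw [Fintype.card_fun, Fintype.card_fin, blk_card N t j ht0 hj, hr]
  by_cases hfull : ∃ j < t, (U j).card = q ^ (N / t + if j < r then 1 else 0)
  · obtain ⟨j, hj, hcard⟩ := hfull
    apply le_max_of_le_left
    have himg : (U j).image (p j) = Finset.univ := by
      rw [← Finset.card_eq_iff_eq_univ, Finset.card_image_of_injOn (hinj j), hcard,
        Fintype.card_fun, Fintype.card_fin, blk_card N t j ht0 hj, hr]
    have hCU : C ⊆ U j := by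
      intro c hc
      have : p j c ∈ (U j).image (p j) := by rw [himg]; exact Finset.mem_univ _
      obtain ⟨u, hu, h⟩ := Finset.mem_image.1 this
      have hu2 := (Finset.mem_filter.1 hu).2 c hc (fun i hi => congrFun h ⟨i, hi⟩)
      rwa [hu2]
    refine (Finset.card_le_card hCU).trans ?_
    rw [hcard, hceil]
    rcases Nat.eq_zero_or_pos q with rfl | hq
    · have : IsEmpty (Fin N → Fin 0) := ⟨fun f => (f ⟨0, hN⟩).elim0⟩
      rw [← hcard, Finset.eq_empty_of_isEmpty (U j)]
      simp
    · apply Nat.pow_le_pow_right hq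
      split_ifs <;> omega
  · push Not at hfull
    apply le_max_of_le_right
    rw [← sum_blk t r _ _ hrt.le]
    refine (Finset.card_le_card hcov).trans (Finset.card_biUnion_le.trans ?_)
    apply Finset.sum_le_sum
    intro j hj
    have hj := Finset.mem_range.1 hj
    have h1 := hle j hj
    have h2 := hfull j hj
    rw [hceil]
    by_cases h : j < r
    · rw [if_pos h] at h1 h2 ⊢
      rw [if_pos (by omega)]
      omega
    · rw [if_neg h] at h1 h2 ⊢
      rw [add_zero] at h1 h2
      omega
end

section
/- For every integer t ≥ 3 and every integer N with t+1 ≤ N ≤ 3t, every binary t-frameproof code of length N has at most N codewords; that is, M_FP(N,2,t) ≤ N. -/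
section helpers
open Finset

def FIso {N : ℕ} (Q A : Finset (Fin N → Fin 2)) (i : Fin N) : Prop :=
  ∃ s : Fin 2, ∀ x ∈ Q, (x i = s ↔ x ∈ A)

def FUniq {N : ℕ} (Q : Finset (Fin N → Fin 2)) (c : Fin N → Fin 2) : Prop :=
  ∃ i, ∀ x ∈ Q, x ≠ c → x i ≠ c i

lemma fin2_eq {a b c : Fin 2} (h1 : a ≠ b) (h2 : c ≠ b) : a = c := by omega

lemma fp_use {N t : ℕ} {C : Finset (Fin N → Fin 2)} (hC : IsFrameproof t C)
    {D : Finset (Fin N → Fin 2)} (hD : D ⊆ C) (hc : D.card ≤ t) {x : Fin N → Fin 2}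
    (hx : x ∈ C) (h : ∀ i, ∃ c ∈ D, x i = c i) : x ∈ D := by
  have := hC D hD hc
  have h2 : x ∈ descSet D ∩ (C : Set (Fin N → Fin 2)) := ⟨h, hx⟩
  rw [this] at h2
  exact h2

lemma uniq_iso {N : ℕ} {Q : Finset (Fin N → Fin 2)} {c : Fin N → Fin 2}
    (h : FUniq Q c) : ∃ i, FIso Q {c} i := by
  obtain ⟨i, hi⟩ := h
  refine ⟨i, c i, fun x hx => ?_⟩
  rw [mem_singleton]
  constructor
  · intro h; by_contra h'; exact hi x hx h' h
  · rintro rfl; rfl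

lemma iso_inj {N : ℕ} {Q A B : Finset (Fin N → Fin 2)} (hQ : 5 ≤ Q.card)
    (hA : A ⊆ Q) (hB : B ⊆ Q) (hA2 : A.card ≤ 2) (hB2 : B.card ≤ 2) {i : Fin N}
    (h1 : FIso Q A i) (h2 : FIso Q B i) : A = B := by
  obtain ⟨s, hs⟩ := h1
  obtain ⟨r, hr⟩ := h2
  by_cases hsr : s = r
  · subst hsr
    ext x
    constructor
    · intro hx; exact (hr x (hA hx)).1 ((hs x (hA hx)).2 hx)
    · intro hx; exact (hs x (hB hx)).1 ((hr x (hB hx)).2 hx)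
  · exfalso
    have : Q ⊆ A ∪ B := by
      intro x hx
      rw [mem_union, ← hs x hx, ← hr x hx]
      omega
    have h3 := card_le_card this
    have h4 := card_union_le A B
    omega

open Classical in
lemma iso_count' {N : ℕ} {Q : Finset (Fin N → Fin 2)} (hQ : 5 ≤ Q.card)
    (F : Finset (Finset (Fin N → Fin 2)))
    (hF : ∀ A ∈ F, A ⊆ Q ∧ A.card ≤ 2 ∧ ∃ i, FIso Q A i) :
    F.card ≤ (univ.filter (fun i => ∃ A ∈ F, FIso Q A i)).card := by
  have hF' : ∀ A : Finset (Fin N → Fin 2), ∃ i : Option (Fin N), A ∈ F → ∃ j, i = some j ∧ FIso Q A j := by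
    intro A
    by_cases hA : A ∈ F
    · obtain ⟨i, hi⟩ := (hF A hA).2.2
      exact ⟨some i, fun _ => ⟨i, rfl, hi⟩⟩
    · exact ⟨none, fun h => absurd h hA⟩
  choose f hf using hF'
  have : F.card ≤ ((univ.filter (fun i => ∃ A ∈ F, FIso Q A i)).image some).card := by
    apply card_le_card_of_injOn f
    · intro A hA
      obtain ⟨j, hj, hj'⟩ := hf A hA
      rw [hj]
      exact mem_image_of_mem _ (mem_filter.2 ⟨mem_univ _, A, hA, hj'⟩)
    · intro A hA B hB hAB
      obtain ⟨j, hj, h1⟩ := hf A hA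
      obtain ⟨k, hk, h2⟩ := hf B hB
      have : j = k := by
        have : some j = some k := by rw [← hj, ← hk]; exact hAB
        simpa using this
      subst this
      exact iso_inj hQ (hF A hA).1 (hF B hB).1 (hF A hA).2.1 (hF B hB).2.1 h1 h2
  exact this.trans card_image_le

lemma iso_count {N : ℕ} {Q : Finset (Fin N → Fin 2)} (hQ : 5 ≤ Q.card)
    (F : Finset (Finset (Fin N → Fin 2)))
    (hF : ∀ A ∈ F, A ⊆ Q ∧ A.card ≤ 2 ∧ ∃ i, FIso Q A i) : F.card ≤ N := by
  classical
  have h := iso_count' hQ F hF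
  have h2 := card_le_univ (univ.filter (fun i => ∃ A ∈ F, FIso Q A i))
  rw [Fintype.card_fin] at h2
  exact h.trans h2

lemma pair_iso {N : ℕ} {Q : Finset (Fin N → Fin 2)} {c e : Fin N → Fin 2}
    (h : FUniq (Q.erase e) c) (h' : ¬ FUniq Q c) : ∃ i, FIso Q {c, e} i := by
  obtain ⟨i, hi⟩ := h
  have he : e i = c i := by
    by_contra he
    apply h'
    refine ⟨i, fun x hx hxc => ?_⟩
    by_cases hxe : x = e
    · subst hxe; exact he
    · exact hi x (mem_erase.2 ⟨hxe, hx⟩) hxc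
  refine ⟨i, c i, fun x hx => ?_⟩
  rw [mem_insert, mem_singleton]
  constructor
  · intro h
    by_contra hh
    push Not at hh
    exact hi x (mem_erase.2 ⟨hh.2, hx⟩) hh.1 h
  · rintro (rfl | rfl)
    · rfl
    · exact he

open Classical in
lemma count2 {N : ℕ} {Q : Finset (Fin N → Fin 2)} (hQ : 5 ≤ Q.card)
    (V U : Finset (Fin N → Fin 2)) (hV : V ⊆ Q) (j : ℕ)
    (hj : ∀ e ∈ Q \ V, j ≤ (V.filter (fun c => ∃ i, FIso Q {c, e} i)).card)
    (G : Finset (Finset (Fin N → Fin 2)))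
    (hG : ∀ A ∈ G, A ⊆ V ∧ A.card = 2 ∧ ∃ i, FIso Q A i)
    (hU : ∀ e ∈ U, e ∈ Q ∧ FUniq Q e) :
    (Q.card - V.card) * j + G.card + U.card ≤ N := by
  set O : Finset (Finset (Fin N → Fin 2)) := (Q \ V).biUnion
    (fun e => (V.filter (fun c => ∃ i, FIso Q {c, e} i)).image (fun c => {c, e})) with hO
  have hOm : ∀ A ∈ O, ∃ e ∈ Q \ V, ∃ c ∈ V, A = {c, e} ∧ ∃ i, FIso Q A i := by
    intro A hA
    rw [hO, mem_biUnion] at hA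
    obtain ⟨e, he, hA⟩ := hA
    rw [mem_image] at hA
    obtain ⟨c, hc, rfl⟩ := hA
    rw [mem_filter] at hc
    exact ⟨e, he, c, hc.1, rfl, hc.2⟩
  have hOc : (Q.card - V.card) * j ≤ O.card := by
    rw [hO, card_biUnion, ← card_sdiff_of_subset hV, ← smul_eq_mul]
    · apply card_nsmul_le_sum
      intro e he
      rw [card_image_of_injOn]
      · exact hj e he
      · intro a ha b hb hab
        simp only [coe_filter, Set.mem_ofPred_eq] at ha hb
        have : a ∈ ({b, e} : Finset (Fin N → Fin 2)) := by
          rw [← show ({a, e} : Finset (Fin N → Fin 2)) = {b, e} from hab]; simp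
        rw [mem_insert, mem_singleton] at this
        rcases this with h | h
        · exact h
        · subst h; exact absurd ha.1 (mem_sdiff.1 he).2
    · intro e he e' he' hne
      rw [Function.onFun, disjoint_left]
      intro A hA hA'
      rw [mem_image] at hA hA'
      obtain ⟨a, ha, rfl⟩ := hA
      obtain ⟨b, hb, hab⟩ := hA'
      rw [mem_filter] at ha hb
      have : e ∈ ({b, e'} : Finset (Fin N → Fin 2)) := by rw [hab]; simp
      rw [mem_insert, mem_singleton] at this
      rcases this with h | h
      · subst h; exact (mem_sdiff.1 he).2 hb.1
      · exact hne h
  set S : Finset (Finset (Fin N → Fin 2)) := U.image (fun e => {e}) with hS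
  have hSc : S.card = U.card := card_image_of_injective _ singleton_injective
  have hOG : Disjoint O G := by
    rw [disjoint_left]
    intro A hA hA'
    obtain ⟨e, he, c, hc, rfl, _⟩ := hOm A hA
    exact (mem_sdiff.1 he).2 ((hG _ hA').1 (by simp))
  have hO2 : ∀ A ∈ O, A.card = 2 := by
    intro A hA
    obtain ⟨e, he, c, hc, rfl, _⟩ := hOm A hA
    apply card_pair
    rintro rfl
    exact (mem_sdiff.1 he).2 hc
  have hOS : Disjoint (O ∪ G) S := by
    rw [disjoint_left]
    intro A hA hA'
    have h2 : A.card = 2 := by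
      rcases mem_union.1 hA with h | h
      · exact hO2 A h
      · exact (hG A h).2.1
    rw [hS, mem_image] at hA'
    obtain ⟨e, _, rfl⟩ := hA'
    simp at h2
  have := iso_count hQ (O ∪ G ∪ S) (by
    intro A hA
    rw [mem_union, mem_union] at hA
    rcases hA with (h | h) | h
    · refine ⟨?_, (hO2 A h).le, ?_⟩
      · obtain ⟨e, he, c, hc, rfl, _⟩ := hOm A h
        intro x hx
        rw [mem_insert, mem_singleton] at hx
        rcases hx with rfl | rfl
        · exact hV hc
        · exact (mem_sdiff.1 he).1
      · obtain ⟨e, he, c, hc, _, h⟩ := hOm A h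
        exact h
    · exact ⟨(hG A h).1.trans hV, (hG A h).2.1.le, (hG A h).2.2⟩
    · rw [hS, mem_image] at h
      obtain ⟨e, he, rfl⟩ := h
      refine ⟨by simpa using (hU e he).1, by simp, uniq_iso (hU e he).2⟩)
  rw [card_union_of_disjoint hOS, card_union_of_disjoint hOG] at this
  omega

open Classical in
lemma cost {N t : ℕ} (ht : 3 ≤ t) {C Q : Finset (Fin N → Fin 2)} (hC : IsFrameproof t C)
    (hQC : Q ⊆ C) (hQ : t + 1 ≤ Q.card) {c d : Fin N → Fin 2} (hc : c ∈ Q) (hd : d ∈ Q)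
    (hcd : c ≠ d) (P P' : Finset (Fin N → Fin 2)) (hP : ∀ x ∈ P, x ∈ Q ∧ x ≠ c)
    (hPP : ∀ x ∈ Q, x ≠ c → x ≠ d → x ∈ P ∨ x ∈ P') (hnu : ¬ FUniq Q c)
    (R : Finset (Fin N))
    (hR : ∀ i, i ∉ R → (∃ e ∈ P, e i = c i) ∨
      (∃ e, ∀ x ∈ Q, x ≠ c → x ≠ d → x ≠ e → x i = c i)) :
    t + 1 ≤ P.card + (R.filter (fun i => c i ≠ d i ∧ (∀ x ∈ P, x i ≠ c i) ∧
        ¬ (∀ x ∈ P', x i ≠ d i))).card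
      + min 1 (R.filter (fun i => c i ≠ d i ∧ (∀ x ∈ P, x i ≠ c i) ∧
        (∀ x ∈ P', x i ≠ d i))).card
      + min 1 (R.filter (fun i => c i = d i)).card := by
  set A := R.filter (fun i => c i ≠ d i ∧ (∀ x ∈ P, x i ≠ c i) ∧ ¬ (∀ x ∈ P', x i ≠ d i)) with hA
  set B := R.filter (fun i => c i ≠ d i ∧ (∀ x ∈ P, x i ≠ c i) ∧ (∀ x ∈ P', x i ≠ d i)) with hB
  set E := R.filter (fun i => c i = d i) with hE
  by_contra hlt
  have hch : ∀ i, ∃ x, x ∈ Q ∧ x ≠ c ∧ x i = c i := by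
    intro i
    by_contra h
    push Not at h
    exact hnu ⟨i, fun x hx hxc => h x hx hxc⟩
  choose g hgQ hgc hgi using hch
  -- the extra set for B
  have hXB : ∃ X : Finset (Fin N → Fin 2), X ⊆ Q.erase c ∧ X.card ≤ min 1 B.card ∧
      ∀ i ∈ B, ∃ x ∈ X, x i = c i := by
    rcases B.eq_empty_or_nonempty with h | ⟨i0, hi0⟩
    · exact ⟨∅, by simp, by simp, by simp [h]⟩
    · have hp : 0 < B.card := card_pos.2 ⟨i0, hi0⟩
      refine ⟨{g i0}, ?_, ?_, ?_⟩
      · rw [singleton_subset_iff]; exact mem_erase.2 ⟨hgc _, hgQ _⟩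
      · rw [card_singleton]; omega
      · intro i hi
        refine ⟨g i0, mem_singleton_self _, ?_⟩
        rw [hB, mem_filter] at hi hi0
        have h1 : g i0 ≠ d := by
          intro h
          have := hgi i0
          rw [h] at this
          exact hi0.2.1 this.symm
        have h2 : g i0 ∉ P := fun h => hi0.2.2.1 _ h (hgi i0)
        have h3 : g i0 ∈ P' := (hPP _ (hgQ _) (hgc _) h1).resolve_left h2
        exact fin2_eq (hi.2.2.2 _ h3) hi.2.1
  have hXE : ∃ X : Finset (Fin N → Fin 2), X ⊆ Q.erase c ∧ X.card ≤ min 1 E.card ∧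
      ∀ i ∈ E, ∃ x ∈ X, x i = c i := by
    rcases E.eq_empty_or_nonempty with h | ⟨i0, hi0⟩
    · exact ⟨∅, by simp, by simp, by simp [h]⟩
    · have hp : 0 < E.card := card_pos.2 ⟨i0, hi0⟩
      refine ⟨{d}, ?_, ?_, ?_⟩
      · rw [singleton_subset_iff]; exact mem_erase.2 ⟨hcd.symm, hd⟩
      · rw [card_singleton]; omega
      · intro i hi
        rw [hE, mem_filter] at hi
        exact ⟨d, mem_singleton_self _, hi.2.symm⟩
  obtain ⟨X, hX1, hX2, hX3⟩ := hXB
  obtain ⟨Y, hY1, hY2, hY3⟩ := hXE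
  have hsub : P ∪ A.image g ∪ X ∪ Y ⊆ Q.erase c := by
    refine union_subset (union_subset (union_subset ?_ ?_) hX1) hY1
    · intro x hx; exact mem_erase.2 ⟨(hP x hx).2, (hP x hx).1⟩
    · intro x hx
      obtain ⟨i, _, rfl⟩ := mem_image.1 hx
      exact mem_erase.2 ⟨hgc _, hgQ _⟩
  have hcard : (P ∪ A.image g ∪ X ∪ Y).card ≤ t := by
    have h1 := card_union_le (P ∪ A.image g ∪ X) Y
    have h2 := card_union_le (P ∪ A.image g) X
    have h3 := card_union_le P (A.image g)
    have h4 : (A.image g).card ≤ A.card := card_image_le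
    omega
  obtain ⟨D, hD1, hD2, hD3⟩ := exists_subsuperset_card_eq hsub hcard
    (by rw [card_erase_of_mem hc]; omega)
  have hcD : c ∈ D := by
    apply fp_use hC (hD2.trans ((erase_subset _ _).trans hQC)) hD3.le (hQC hc)
    intro i
    have hPD : P ⊆ D := fun x hx => hD1 (by simp [hx])
    have hXD : X ⊆ D := fun x hx => hD1 (by simp [hx])
    have hYD : Y ⊆ D := fun x hx => hD1 (by simp [hx])
    by_cases hi : i ∈ R
    · by_cases h1 : c i = d i
      · obtain ⟨x, hx, hxi⟩ := hY3 i (mem_filter.2 ⟨hi, h1⟩)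
        exact ⟨x, hYD hx, hxi.symm⟩
      by_cases h2 : ∀ x ∈ P, x i ≠ c i
      · by_cases h3 : ∀ x ∈ P', x i ≠ d i
        · obtain ⟨x, hx, hxi⟩ := hX3 i (mem_filter.2 ⟨hi, h1, h2, h3⟩)
          exact ⟨x, hXD hx, hxi.symm⟩
        · refine ⟨g i, hD1 ?_, (hgi i).symm⟩
          have : g i ∈ A.image g := mem_image_of_mem g (mem_filter.2 ⟨hi, h1, h2, h3⟩)
          simp only [mem_union]
          tauto
      · push Not at h2
        obtain ⟨x, hx, hxi⟩ := h2
        exact ⟨x, hPD hx, hxi.symm⟩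
    · rcases hR i hi with ⟨e, he, hei⟩ | ⟨e, he⟩
      · exact ⟨e, hPD he, hei.symm⟩
      · have : ∃ x ∈ D, x ∉ ({d, e} : Finset (Fin N → Fin 2)) := by
          by_contra h
          push Not at h
          have h5 := card_le_card (show D ⊆ {d, e} from h)
          have h6 : ({d, e} : Finset (Fin N → Fin 2)).card ≤ 2 := card_le_two
          omega
        obtain ⟨x, hx, hxe⟩ := this
        simp only [mem_insert, mem_singleton, not_or] at hxe
        have hxQ := mem_erase.1 (hD2 hx)
        exact ⟨x, hx, (he x hxQ.2 hxQ.1 hxe.1 hxe.2).symm⟩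
  exact (mem_erase.1 (hD2 hcD)).1 rfl


lemma ite_aux (a b p q : Prop) (hab : a ↔ b) [Decidable (¬ a ∧ p ∧ ¬ q)]
    [Decidable (¬ b ∧ q ∧ ¬ p)] [Decidable (¬ a ∧ p ∧ q)] [Decidable a] :
    (if ¬ a ∧ p ∧ ¬ q then 1 else 0) + (if ¬ b ∧ q ∧ ¬ p then 1 else 0) +
      (if ¬ a ∧ p ∧ q then 1 else 0) + (if a then 1 else 0) ≤ 1 := by
  by_cases h1 : a <;> by_cases h2 : p <;> by_cases h3 : q <;> simp [← hab, h1, h2, h3]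

open Classical in
lemma two_case {N t : ℕ} (ht : 3 ≤ t) (hN : N ≤ 3 * t) {C Q : Finset (Fin N → Fin 2)}
    (hC : IsFrameproof t C)
    (hQC : Q ⊆ C) (hQ : t + 3 ≤ Q.card) {c d : Fin N → Fin 2} (hc : c ∈ Q) (hd : d ∈ Q)
    (hcd : c ≠ d) (hnc : ¬ FUniq Q c) (hnd : ¬ FUniq Q d)
    (hu : ∀ x ∈ Q, x ≠ c → x ≠ d → FUniq Q x)
    (hp : ∀ x ∈ Q, x ≠ c → x ≠ d → (∃ i, FIso Q {c, x} i) ∨ (∃ i, FIso Q {d, x} i)) :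
    False := by
  set U := (Q.erase c).erase d with hU
  have hUm : ∀ x, x ∈ U ↔ x ≠ d ∧ x ≠ c ∧ x ∈ Q := by
    intro x; rw [hU, mem_erase, mem_erase]
  have hUc : U.card + 2 = Q.card := by
    rw [hU, card_erase_of_mem (mem_erase.2 ⟨hcd.symm, hd⟩), card_erase_of_mem hc]; omega
  set P := U.filter (fun x => ∃ i, FIso Q {c, x} i) with hP
  set P' := U.filter (fun x => ∃ i, FIso Q {d, x} i) with hP'
  set F1 : Finset (Finset (Fin N → Fin 2)) := U.image (fun x => {x}) with hF1
  set F2 : Finset (Finset (Fin N → Fin 2)) := P.image (fun x => {c, x}) with hF2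
  set F3 : Finset (Finset (Fin N → Fin 2)) := P'.image (fun x => {d, x}) with hF3
  have hinj : ∀ a : Fin N → Fin 2, Set.InjOn (fun x => ({a, x} : Finset (Fin N → Fin 2)))
      {x | x ≠ a} := by
    intro a x hx y hy hxy
    have : x ∈ ({a, y} : Finset (Fin N → Fin 2)) := by
      rw [← show ({a, x} : Finset (Fin N → Fin 2)) = {a, y} from hxy]; simp
    rw [mem_insert, mem_singleton] at this
    exact this.resolve_left hx
  have hPU : ∀ x ∈ P, x ≠ d ∧ x ≠ c ∧ x ∈ Q := fun x hx => (hUm x).1 (mem_filter.1 hx).1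
  have hPU' : ∀ x ∈ P', x ≠ d ∧ x ≠ c ∧ x ∈ Q := fun x hx => (hUm x).1 (mem_filter.1 hx).1
  have c1 : F1.card = U.card := card_image_of_injective _ singleton_injective
  have c2 : F2.card = P.card :=
    card_image_of_injOn ((hinj c).mono (fun x hx => (hPU x hx).2.1))
  have c3 : F3.card = P'.card :=
    card_image_of_injOn ((hinj d).mono (fun x hx => (hPU' x hx).1))
  have d23 : Disjoint F2 F3 := by
    rw [disjoint_left]
    intro A hA hA'
    obtain ⟨x, hx, rfl⟩ := mem_image.1 hA
    obtain ⟨y, hy, hxy⟩ := mem_image.1 hA'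
    have : c ∈ ({d, y} : Finset (Fin N → Fin 2)) := by
      rw [show ({d, y} : Finset (Fin N → Fin 2)) = {c, x} from hxy]; simp
    rw [mem_insert, mem_singleton] at this
    rcases this with h | h
    · exact hcd h
    · exact (hPU' y hy).2.1 h.symm
  have d123 : Disjoint F1 (F2 ∪ F3) := by
    rw [disjoint_left]
    intro A hA hA'
    obtain ⟨x, hx, rfl⟩ := mem_image.1 hA
    have hx' := (hUm x).1 hx
    rcases mem_union.1 hA' with h | h
    · obtain ⟨y, hy, hxy⟩ := mem_image.1 h
      have : c ∈ ({x} : Finset (Fin N → Fin 2)) := by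
        rw [← show ({c, y} : Finset (Fin N → Fin 2)) = {x} from hxy]; simp
      exact hx'.2.1 (mem_singleton.1 this).symm
    · obtain ⟨y, hy, hxy⟩ := mem_image.1 h
      have : d ∈ ({x} : Finset (Fin N → Fin 2)) := by
        rw [← show ({d, y} : Finset (Fin N → Fin 2)) = {x} from hxy]; simp
      exact hx'.1 (mem_singleton.1 this).symm
  set F := F1 ∪ (F2 ∪ F3) with hF
  have cF : F.card = U.card + (P.card + P'.card) := by
    rw [hF, card_union_of_disjoint d123, card_union_of_disjoint d23, c1, c2, c3]
  have hcount := iso_count' (by omega : 5 ≤ Q.card) F (by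
    intro A hA
    rcases mem_union.1 hA with h | h
    · obtain ⟨x, hx, rfl⟩ := mem_image.1 h
      have hx' := (hUm x).1 hx
      exact ⟨by simpa using hx'.2.2, by simp, uniq_iso (hu x hx'.2.2 hx'.2.1 hx'.1)⟩
    rcases mem_union.1 h with h | h
    · obtain ⟨x, hx, rfl⟩ := mem_image.1 h
      have hx' := hPU x hx
      exact ⟨insert_subset hc (by simpa using hx'.2.2), card_le_two, (mem_filter.1 hx).2⟩
    · obtain ⟨x, hx, rfl⟩ := mem_image.1 h
      have hx' := hPU' x hx
      exact ⟨insert_subset hd (by simpa using hx'.2.2), card_le_two, (mem_filter.1 hx).2⟩)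
  set R0 := univ.filter (fun i => ∃ A ∈ F, FIso Q A i) with hR0
  have hRc : R0ᶜ.card + R0.card = N := by
    rw [card_compl_add_card, Fintype.card_fin]
  have easy : ∀ i, i ∉ R0ᶜ → ∃ A ∈ F, FIso Q A i := by
    intro i hi
    rw [mem_compl, not_not] at hi
    exact (mem_filter.1 hi).2
  have k1 := cost ht hC hQC (by omega) hc hd hcd P P' (fun x hx => ⟨(hPU x hx).2.2, (hPU x hx).2.1⟩)
    (by
      intro x hx h1 h2
      rcases hp x hx h1 h2 with h | h
      · left; exact mem_filter.2 ⟨(hUm x).2 ⟨h2, h1, hx⟩, h⟩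
      · right; exact mem_filter.2 ⟨(hUm x).2 ⟨h2, h1, hx⟩, h⟩) hnc R0ᶜ (by
      intro i hi
      obtain ⟨A, hA, s, hs⟩ := easy i hi
      rcases mem_union.1 hA with h | h
      · right
        obtain ⟨e, he, rfl⟩ := mem_image.1 h
        have he' := (hUm e).1 he
        refine ⟨e, fun x hx h1 h2 h3 => fin2_eq (b := s) ?_ ?_⟩
        · rw [Ne, hs x hx]; simpa using h3
        · rw [Ne, hs c hc]; simpa using he'.2.1.symm
      rcases mem_union.1 h with h | h
      · left
        obtain ⟨e, he, rfl⟩ := mem_image.1 h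
        refine ⟨e, he, ?_⟩
        rw [(hs e (hPU e he).2.2).2 (by simp), (hs c hc).2 (by simp)]
      · right
        obtain ⟨e, he, rfl⟩ := mem_image.1 h
        have he' := hPU' e he
        refine ⟨e, fun x hx h1 h2 h3 => fin2_eq (b := s) ?_ ?_⟩
        · rw [Ne, hs x hx]; simp [h2, h3]
        · rw [Ne, hs c hc]; simp [hcd, he'.2.1.symm])
  have k2 := cost ht hC hQC (by omega) hd hc hcd.symm P' P
    (fun x hx => ⟨(hPU' x hx).2.2, (hPU' x hx).1⟩)
    (by
      intro x hx h2 h1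
      rcases hp x hx h1 h2 with h | h
      · right; exact mem_filter.2 ⟨(hUm x).2 ⟨h2, h1, hx⟩, h⟩
      · left; exact mem_filter.2 ⟨(hUm x).2 ⟨h2, h1, hx⟩, h⟩) hnd R0ᶜ (by
      intro i hi
      obtain ⟨A, hA, s, hs⟩ := easy i hi
      rcases mem_union.1 hA with h | h
      · right
        obtain ⟨e, he, rfl⟩ := mem_image.1 h
        have he' := (hUm e).1 he
        refine ⟨e, fun x hx h1 h2 h3 => fin2_eq (b := s) ?_ ?_⟩
        · rw [Ne, hs x hx]; simpa using h3
        · rw [Ne, hs d hd]; simpa using he'.1.symm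
      rcases mem_union.1 h with h | h
      · right
        obtain ⟨e, he, rfl⟩ := mem_image.1 h
        have he' := hPU e he
        refine ⟨e, fun x hx h1 h2 h3 => fin2_eq (b := s) ?_ ?_⟩
        · rw [Ne, hs x hx]; simp [h2, h3]
        · rw [Ne, hs d hd]; simp [hcd.symm, he'.1.symm]
      · left
        obtain ⟨e, he, rfl⟩ := mem_image.1 h
        refine ⟨e, he, ?_⟩
        rw [(hs e (hPU' e he).2.2).2 (by simp), (hs d hd).2 (by simp)])
  have eB : (R0ᶜ.filter (fun i => d i ≠ c i ∧ (∀ x ∈ P', x i ≠ d i) ∧ (∀ x ∈ P, x i ≠ c i))) =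
      R0ᶜ.filter (fun i => c i ≠ d i ∧ (∀ x ∈ P, x i ≠ c i) ∧ (∀ x ∈ P', x i ≠ d i)) := by
    apply filter_congr
    intro i _
    rw [ne_comm]
    tauto
  have eE : (R0ᶜ.filter (fun i => d i = c i)) = R0ᶜ.filter (fun i => c i = d i) := by
    apply filter_congr
    intro i _
    exact eq_comm
  rw [eB, eE] at k2
  have hsum : (R0ᶜ.filter (fun i => c i ≠ d i ∧ (∀ x ∈ P, x i ≠ c i) ∧
        ¬ (∀ x ∈ P', x i ≠ d i))).card + (R0ᶜ.filter (fun i => d i ≠ c i ∧ (∀ x ∈ P', x i ≠ d i) ∧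
        ¬ (∀ x ∈ P, x i ≠ c i))).card + (R0ᶜ.filter (fun i => c i ≠ d i ∧ (∀ x ∈ P, x i ≠ c i) ∧
        (∀ x ∈ P', x i ≠ d i))).card + (R0ᶜ.filter (fun i => c i = d i)).card ≤ R0ᶜ.card := by
    rw [card_eq_sum_ones R0ᶜ]
    simp only [card_filter]
    rw [← sum_add_distrib, ← sum_add_distrib, ← sum_add_distrib]
    apply sum_le_sum
    intro i _
    exact ite_aux _ _ _ _ eq_comm
  omega

lemma pair_ne {N : ℕ} {a b c d : Fin N → Fin 2} (h1 : a ≠ c) (h2 : a ≠ d) :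
    ({a, b} : Finset (Fin N → Fin 2)) ≠ {c, d} := by
  intro h
  have : a ∈ ({c, d} : Finset (Fin N → Fin 2)) := by rw [← h]; simp
  simp only [mem_insert, mem_singleton] at this
  tauto

lemma pair_ne' {N : ℕ} {a b c d : Fin N → Fin 2} (h1 : b ≠ c) (h2 : b ≠ d) :
    ({a, b} : Finset (Fin N → Fin 2)) ≠ {c, d} := by
  rw [pair_comm]; exact pair_ne h1 h2

lemma four_pairs {N : ℕ} {X : Finset (Fin N → Fin 2) → Prop} [DecidablePred X] {a b c d : Fin N → Fin 2}
    (hab : a ≠ b) (hac : a ≠ c) (had : a ≠ d) (hbc : b ≠ c) (hbd : b ≠ d) (hcd : c ≠ d)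
    (ha1 : X {a, b} ∨ X {a, c}) (ha2 : X {a, b} ∨ X {a, d}) (ha3 : X {a, c} ∨ X {a, d})
    (hb1 : X {a, b} ∨ X {b, c}) (hb2 : X {a, b} ∨ X {b, d}) (hb3 : X {b, c} ∨ X {b, d})
    (hc1 : X {a, c} ∨ X {b, c}) (hc2 : X {a, c} ∨ X {c, d}) 
    (hd1 : X {a, d} ∨ X {b, d}) (hd2 : X {a, d} ∨ X {c, d}) :
    4 ≤ ((powersetCard 2 ({a, b, c, d} : Finset (Fin N → Fin 2))).filter X).card := by
  have key : ∀ A B C D : Finset (Fin N → Fin 2), A ≠ B → A ≠ C → A ≠ D → B ≠ C → B ≠ D → C ≠ D →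
      (∀ Y ∈ ({A, B, C, D} : Finset (Finset (Fin N → Fin 2))),
        Y ⊆ ({a, b, c, d} : Finset (Fin N → Fin 2)) ∧ Y.card = 2 ∧ X Y) →
      4 ≤ ((powersetCard 2 ({a, b, c, d} : Finset (Fin N → Fin 2))).filter X).card := by
    intro A B C D h1 h2 h3 h4 h5 h6 h
    have : ({A, B, C, D} : Finset (Finset (Fin N → Fin 2))).card = 4 := by
      rw [card_insert_of_notMem, card_insert_of_notMem, card_pair h6] <;> simp [*]
    rw [← this]
    apply card_le_card
    intro Y hY
    rw [mem_filter, mem_powersetCard]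
    have h7 := h Y hY
    exact ⟨⟨h7.1, h7.2.1⟩, h7.2.2⟩
  have nab : ({a, b} : Finset (Fin N → Fin 2)) ≠ {a, c} := pair_ne' hab.symm hbc
  have n2 : ({a, b} : Finset (Fin N → Fin 2)) ≠ {a, d} := pair_ne' hab.symm hbd
  have n3 : ({a, b} : Finset (Fin N → Fin 2)) ≠ {b, c} := pair_ne hab hac
  have n4 : ({a, b} : Finset (Fin N → Fin 2)) ≠ {b, d} := pair_ne hab had
  have n5 : ({a, b} : Finset (Fin N → Fin 2)) ≠ {c, d} := pair_ne hac had
  have n6 : ({a, c} : Finset (Fin N → Fin 2)) ≠ {a, d} := pair_ne' hac.symm hcd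
  have n7 : ({a, c} : Finset (Fin N → Fin 2)) ≠ {b, c} := pair_ne hab hac
  have n8 : ({a, c} : Finset (Fin N → Fin 2)) ≠ {b, d} := pair_ne hab had
  have n9 : ({a, c} : Finset (Fin N → Fin 2)) ≠ {c, d} := pair_ne hac had
  have n10 : ({a, d} : Finset (Fin N → Fin 2)) ≠ {b, c} := pair_ne hab hac
  have n11 : ({a, d} : Finset (Fin N → Fin 2)) ≠ {b, d} := pair_ne hab had
  have n12 : ({a, d} : Finset (Fin N → Fin 2)) ≠ {c, d} := pair_ne hac had
  have n13 : ({b, c} : Finset (Fin N → Fin 2)) ≠ {b, d} := pair_ne' hbc.symm hcd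
  have n14 : ({b, c} : Finset (Fin N → Fin 2)) ≠ {c, d} := pair_ne hbc hbd
  have n15 : ({b, d} : Finset (Fin N → Fin 2)) ≠ {c, d} := pair_ne hbc hbd
  have sub : ∀ x y : Fin N → Fin 2, x ≠ y → x ∈ ({a, b, c, d} : Finset (Fin N → Fin 2)) →
      y ∈ ({a, b, c, d} : Finset (Fin N → Fin 2)) → X {x, y} →
      ({x, y} : Finset (Fin N → Fin 2)) ⊆ {a, b, c, d} ∧
      ({x, y} : Finset (Fin N → Fin 2)).card = 2 ∧ X {x, y} := by
    intro x y hxy hx hy h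
    exact ⟨insert_subset hx (singleton_subset_iff.2 hy), card_pair hxy, h⟩
  have s1 := sub a b hab (by simp) (by simp)
  have s2 := sub a c hac (by simp) (by simp)
  have s3 := sub a d had (by simp) (by simp)
  have s4 := sub b c hbc (by simp) (by simp)
  have s5 := sub b d hbd (by simp) (by simp)
  have s6 := sub c d hcd (by simp) (by simp)
  have mk : ∀ (A B C D : Finset (Fin N → Fin 2)) (Z : Finset (Fin N → Fin 2) → Prop),
      Z A → Z B → Z C → Z D → ∀ Y ∈ ({A, B, C, D} : Finset (Finset (Fin N → Fin 2))), Z Y := by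
    intro A B C D Z h1 h2 h3 h4 Y hY
    simp only [mem_insert, mem_singleton] at hY
    rcases hY with rfl | rfl | rfl | rfl <;> assumption
  by_cases e1 : X {a, b}
  · by_cases e2 : X {a, c}
    · by_cases e3 : X {a, d}
      · rcases hb3 with e4 | e4
        · exact key _ _ _ _ nab n2 n3 n6 n7 n10 (mk _ _ _ _ _ (s1 e1) (s2 e2) (s3 e3) (s4 e4))
        · exact key _ _ _ _ nab n2 n4 n6 n8 n11 (mk _ _ _ _ _ (s1 e1) (s2 e2) (s3 e3) (s5 e4))
      · exact key _ _ _ _ nab n4 n5 n8 n9 n15 (mk _ _ _ _ _ (s1 e1) (s2 e2)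
          (s5 (hd1.resolve_left e3)) (s6 (hd2.resolve_left e3)))
    · exact key _ _ _ _ n2 n3 n5 n10 n12 n14 (mk _ _ _ _ _ (s1 e1) (s3 (ha3.resolve_left e2))
          (s4 (hc1.resolve_left e2)) (s6 (hc2.resolve_left e2)))
  · exact key _ _ _ _ n6 n7 n8 n10 n11 n13 (mk _ _ _ _ _ (s2 (ha1.resolve_left e1))
      (s3 (ha2.resolve_left e1)) (s4 (hb1.resolve_left e1)) (s5 (hb2.resolve_left e1)))

lemma card_pred {W : Type*} (V : Finset W) (p : W → Prop) [DecidablePred p]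
    (h : ∀ x ∈ V, ∀ y ∈ V, x ≠ y → p x ∨ p y) : V.card - 1 ≤ (V.filter p).card := by
  have h1 := card_filter_add_card_filter_not (s := V) p
  have h2 : (V.filter (fun x => ¬ p x)).card ≤ 1 := by
    rw [card_le_one]
    intro x hx y hy
    rw [mem_filter] at hx hy
    by_contra hxy
    have := h x hx.1 y hy.1 hxy
    tauto
  omega

open Classical in
lemma main_lemma {N t : ℕ} (ht : 3 ≤ t) (hN : N ≤ 3 * t) {C : Finset (Fin N → Fin 2)}
    (hC : IsFrameproof t C) : ∀ m : ℕ, ∀ Q : Finset (Fin N → Fin 2), Q.card = m → Q ⊆ C →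
    t + 2 ≤ Q.card → ∀ c ∈ Q, ∀ d ∈ Q, c ≠ d → ¬ FUniq Q c → ¬ FUniq Q d → False := by
  intro m
  induction m with
  | zero => intro Q h _ h2; omega
  | succ m ih =>
  intro Q hm hQC hQ c hc d hd hcd hnc hnd
  set V := Q.filter (fun x => ¬ FUniq Q x) with hV
  have hVm : ∀ x, x ∈ V ↔ x ∈ Q ∧ ¬ FUniq Q x := fun x => mem_filter
  have hU : ∀ e ∈ Q \ V, e ∈ Q ∧ FUniq Q e := by
    intro e he
    rw [mem_sdiff, hVm] at he
    exact ⟨he.1, by tauto⟩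
  have hVQ : V ⊆ Q := filter_subset _ _
  have hUc : (Q \ V).card = Q.card - V.card := card_sdiff_of_subset hVQ
  have hVle : V.card ≤ Q.card := card_le_card hVQ
  have hcdV : ({c, d} : Finset (Fin N → Fin 2)) ⊆ V := by
    rw [insert_subset_iff, singleton_subset_iff, hVm, hVm]; tauto
  have hV2 : 2 ≤ V.card := (card_pair hcd).symm.le.trans (card_le_card hcdV)
  have hQ5 : 5 ≤ Q.card := by omega
  rcases Nat.lt_or_ge (t + 2) Q.card with hbig | hsmall
  · -- large case
    have H : ∀ e ∈ Q, ∀ x ∈ V, ∀ y ∈ V, x ≠ e → y ≠ e → x ≠ y →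
        (∃ i, FIso Q {x, e} i) ∨ (∃ i, FIso Q {y, e} i) := by
      intro e he x hx y hy hxe hye hxy
      by_contra hcon
      rw [not_or] at hcon
      rw [hVm] at hx hy
      have hce : (Q.erase e).card = m := by rw [card_erase_of_mem he]; omega
      exact ih (Q.erase e) hce ((erase_subset _ _).trans hQC) (by omega) x
        (mem_erase.2 ⟨hxe, hx.1⟩) y (mem_erase.2 ⟨hye, hy.1⟩) hxy
        (fun h => hcon.1 (pair_iso h hx.2)) (fun h => hcon.2 (pair_iso h hy.2))
    have Hj : ∀ V0 ⊆ V, ∀ e ∈ Q \ V0,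
        V0.card - 1 ≤ (V0.filter (fun c => ∃ i, FIso Q {c, e} i)).card := by
      intro V0 hV0 e he
      rw [mem_sdiff] at he
      apply card_pred
      intro x hx y hy hxy
      exact H e he.1 x (hV0 hx) y (hV0 hy) (fun h => he.2 (h ▸ hx)) (fun h => he.2 (h ▸ hy)) hxy
    rcases Nat.lt_or_ge V.card 4 with h4 | h4
    · rcases Nat.lt_or_ge V.card 3 with h3 | h3
      · have hVe : ({c, d} : Finset (Fin N → Fin 2)) = V :=
          eq_of_subset_of_card_le hcdV (by rw [card_pair hcd]; omega)
        have hcV := (hVm c).2 ⟨hc, hnc⟩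
        have hdV := (hVm d).2 ⟨hd, hnd⟩
        refine two_case ht hN hC hQC (by omega) hc hd hcd hnc hnd ?_ ?_
        · intro x hx h1 h2
          by_contra h
          have := (hVm x).2 ⟨hx, h⟩
          rw [← hVe] at this
          simp only [mem_insert, mem_singleton] at this
          tauto
        · intro x hx h1 h2
          exact H x hx c hcV d hdV h1.symm h2.symm hcd
      · have h3' : V.card = 3 := by omega
        obtain ⟨x, y, z, hxy, hxz, hyz, hE⟩ := card_eq_three.1 h3'
        have hx : x ∈ V := by rw [hE]; simp
        have hy : y ∈ V := by rw [hE]; simp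
        have hz : z ∈ V := by rw [hE]; simp
        have hG : ∃ A : Finset (Fin N → Fin 2), A ⊆ V ∧ A.card = 2 ∧ ∃ i, FIso Q A i := by
          rcases H z (hVQ hz) x hx y hy hxz hyz hxy with h | h
          · exact ⟨_, insert_subset hx (singleton_subset_iff.2 hz), card_pair hxz, h⟩
          · exact ⟨_, insert_subset hy (singleton_subset_iff.2 hz), card_pair hyz, h⟩
        obtain ⟨A, hA⟩ := hG
        have := count2 hQ5 V (Q \ V) hVQ 2 (by
          intro e he
          have := Hj V (Subset.refl _) e he
          omega) {A} (by
          intro B hB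
          rw [mem_singleton] at hB
          subst hB; exact hA) hU
        rw [card_singleton, hUc] at this
        omega
    · obtain ⟨V0, hV0, hV04⟩ := exists_subset_card_eq h4
      obtain ⟨x, y, z, w, hxy, hxz, hxw, hyz, hyw, hzw, hE⟩ := card_eq_four.1 hV04
      have hx : x ∈ V := hV0 (by rw [hE]; simp)
      have hy : y ∈ V := hV0 (by rw [hE]; simp)
      have hz : z ∈ V := hV0 (by rw [hE]; simp)
      have hw : w ∈ V := hV0 (by rw [hE]; simp)
      have H' : ∀ e ∈ V, ∀ x ∈ V, ∀ y ∈ V, e ≠ x → e ≠ y → x ≠ y →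
        (∃ i, FIso Q {e, x} i) ∨ (∃ i, FIso Q {e, y} i) := by
        intro e he x hx y hy h1 h2 h3
        rw [pair_comm e x, pair_comm e y]
        exact H e (hVQ he) x hx y hy h1.symm h2.symm h3
      have h4p := four_pairs (X := fun A => ∃ i, FIso Q A i) hxy hxz hxw hyz hyw hzw
        (H' x hx y hy z hz hxy hxz hyz) (H' x hx y hy w hw hxy hxw hyw)
        (H' x hx z hz w hw hxz hxw hzw)
        (by have := H' y hy x hx z hz hxy.symm hyz hxz; rwa [pair_comm y x] at this)
        (by have := H' y hy x hx w hw hxy.symm hyw hxw; rwa [pair_comm y x] at this)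
        (H' y hy z hz w hw hyz hyw hzw)
        (H z (hVQ hz) x hx y hy hxz hyz hxy)
        (by have := H' z hz x hx w hw hxz.symm hzw hxw; rwa [pair_comm z x] at this)
        (H w (hVQ hw) x hx y hy hxw hyw hxy)
        (H w (hVQ hw) x hx z hz hxw hzw hxz)
      rw [← hE] at h4p
      have := count2 hQ5 V0 ∅ (hV0.trans hVQ) 3 (by
          intro e he
          have := Hj V0 hV0 e he
          omega) ((powersetCard 2 V0).filter (fun A => ∃ i, FIso Q A i)) (by
          intro B hB
          rw [mem_filter, mem_powersetCard] at hB
          tauto) (by simp)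
      rw [card_empty] at this
      omega
  · -- base case
    have hcard : Q.card = t + 2 := by omega
    have H : ∀ e ∈ Q, ∀ x ∈ V, x ≠ e → (∃ i, FIso Q {x, e} i) := by
      intro e he x hx hxe
      rw [hVm] at hx
      apply pair_iso _ hx.2
      by_contra hcon
      have hxe' : x ∈ Q.erase e := mem_erase.2 ⟨hxe, hx.1⟩
      have : x ∈ (Q.erase e).erase x := by
        apply fp_use hC (((erase_subset _ _).trans (erase_subset _ _)).trans hQC)
          _ (hQC hx.1)
        · intro i
          by_contra h
          push Not at h
          exact hcon ⟨i, fun y hy hyx => (h y (mem_erase.2 ⟨hyx, hy⟩)).symm⟩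
        · rw [card_erase_of_mem hxe', card_erase_of_mem he]; omega
      simp at this
    have cnt : ∀ V0 ⊆ V, ∀ U ⊆ Q \ V,
        (Q.card - V0.card) * V0.card + V0.card.choose 2 + U.card ≤ N := by
      intro V0 hV0 U hUU
      rw [← card_powersetCard]
      apply count2 hQ5 V0 U (hV0.trans hVQ)
      · intro e he
        rw [mem_sdiff] at he
        rw [filter_true_of_mem]
        intro x hx
        exact H e he.1 x (hV0 hx) (fun h => he.2 (h ▸ hx))
      · intro A hA
        rw [mem_powersetCard] at hA
        refine ⟨hA.1, hA.2, ?_⟩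
        obtain ⟨x, y, hxy, rfl⟩ := card_eq_two.1 hA.2
        rw [insert_subset_iff, singleton_subset_iff] at hA
        exact H y (hVQ (hV0 hA.1.2)) x (hV0 hA.1.1) hxy
      · intro e he; exact hU e (hUU he)
    rcases Nat.lt_or_ge V.card 4 with h4 | h4
    · have := cnt V (Subset.refl _) (Q \ V) (Subset.refl _)
      rw [hUc, hcard] at this
      have h23 : V.card = 2 ∨ V.card = 3 := by omega
      rcases h23 with h | h <;> rw [h] at this <;> simp [Nat.choose] at this <;> omega
    · obtain ⟨V0, hV0, hV04⟩ := exists_subset_card_eq h4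
      have := cnt V0 hV0 ∅ (empty_subset _)
      rw [hV04, hcard] at this
      simp [Nat.choose] at this
      omega

end helpers

/-- For all `t ≥ 3` and all `t+1 ≤ N ≤ 3t`, every binary `t`-frameproof code of
length `N` has at most `N` codewords. -/
theorem stmt_14 (t N : ℕ) (ht : 3 ≤ t) (h1 : t + 1 ≤ N) (h2 : N ≤ 3 * t)
    (C : Finset (Fin N → Fin 2)) (hC : IsFrameproof t C) :
    C.card ≤ N := by
  classical
  by_contra hlt
  have hM := main_lemma ht h2 hC C.card C rfl (Finset.Subset.refl _) (by omega)
  have hQ5 : 5 ≤ C.card := by omega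
  set U := C.filter (fun x => FUniq C x) with hU
  have hUm : ∀ x, x ∈ U ↔ x ∈ C ∧ FUniq C x := fun x => Finset.mem_filter
  have hUc : C.card - 1 ≤ U.card := by
    apply card_pred
    intro x hx y hy hxy
    by_contra h
    rw [not_or] at h
    exact hM x hx y hy hxy h.1 h.2
  set F : Finset (Finset (Fin N → Fin 2)) := U.image (fun x => {x}) with hF
  have hFc : F.card = U.card :=
    Finset.card_image_of_injective _ Finset.singleton_injective
  have hcount := iso_count' hQ5 F (by
    intro A hA
    obtain ⟨x, hx, rfl⟩ := Finset.mem_image.1 hA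
    exact ⟨by simpa using ((hUm x).1 hx).1, by simp, uniq_iso ((hUm x).1 hx).2⟩)
  set R := Finset.univ.filter (fun i => ∃ A ∈ F, FIso C A i) with hR
  have hRu : R = Finset.univ := by
    apply Finset.eq_univ_of_card
    have := Finset.card_le_univ R
    rw [Fintype.card_fin] at *
    omega
  have hUN : U.card ≤ N := by
    have := Finset.card_le_univ R
    rw [Fintype.card_fin] at this
    omega
  have hUC : U ⊆ C := Finset.filter_subset _ _
  obtain ⟨x, hxC, hxU⟩ := Finset.exists_mem_notMem_of_card_lt_card (by omega : U.card < C.card)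
  obtain ⟨D, hDU, hD⟩ := Finset.exists_subset_card_eq (by omega : 2 ≤ U.card)
  apply hxU
  apply hDU
  apply fp_use hC (hDU.trans hUC) (by omega) hxC
  intro i
  have hi : i ∈ R := by rw [hRu]; exact Finset.mem_univ _
  obtain ⟨A, hA, s, hs⟩ := (Finset.mem_filter.1 hi).2
  obtain ⟨e, he, rfl⟩ := Finset.mem_image.1 hA
  obtain ⟨y, hy, hye⟩ := Finset.exists_mem_ne (by omega : 1 < D.card) e
  refine ⟨y, hy, fin2_eq (b := s) ?_ ?_⟩
  · rw [Ne, hs x hxC, Finset.mem_singleton]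
    rintro rfl
    exact hxU he
  · rw [Ne, hs y (hUC (hDU hy)), Finset.mem_singleton]
    exact hye
end

section
/- Let t ≥ 2 and set v = ⌊(t/2+1)²⌋. Then every q-ary t-parent-identifying code of length N has at most (v−1)·q^⌈N/(v−1)⌉ codewords; that is, M_IPP(N,q,t) ≤ (v−1)·q^⌈N/(v−1)⌉. -/
theorem deletion_aux {α : Type*} [DecidableEq α] {n : ℕ} {β : Fin n → Type*}
    [∀ j, DecidableEq (β j)]
    (p : ∀ j, α → β j) : ∀ (m : ℕ) (C : Finset α), C.card = m →
    (∀ C' ⊆ C, C'.Nonempty → ¬ ∀ c ∈ C', ∀ j, ∃ c' ∈ C', c' ≠ c ∧ p j c' = p j c) →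
    C.card ≤ ∑ j, (C.image (p j)).card := by
  intro m
  induction m with
  | zero => intro C h _; omega
  | succ m ih =>
    intro C h H
    have hne : C.Nonempty := by
      rw [← Finset.card_pos]; omega
    have h1 := H C (Finset.Subset.refl _) hne
    push Not at h1
    obtain ⟨c, hc, j, hj⟩ := h1
    have hcard := Finset.card_erase_of_mem hc
    have h2 := ih (C.erase c) (by omega)
      (fun C' hC' => H C' (hC'.trans (Finset.erase_subset _ _)))
    have h3 : ∑ j, ((C.erase c).image (p j)).card < ∑ j, (C.image (p j)).card := by
      apply Finset.sum_lt_sum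
      · intro i _
        exact Finset.card_le_card (Finset.image_subset_image (Finset.erase_subset _ _))
      · refine ⟨j, Finset.mem_univ _, Finset.card_lt_card ?_⟩
        rw [Finset.ssubset_iff_of_subset (Finset.image_subset_image (Finset.erase_subset _ _))]
        refine ⟨p j c, Finset.mem_image_of_mem _ hc, ?_⟩
        intro hm
        obtain ⟨c', hc', he⟩ := Finset.mem_image.1 hm
        rw [Finset.mem_erase] at hc'
        exact hj c' hc'.2 hc'.1 he
    omega

theorem grow_aux {α : Type*} [DecidableEq α] {n : ℕ} (A : Fin n → α → α → Prop)
    (C : Finset α) (hne : C.Nonempty)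
    (hgood : ∀ c ∈ C, ∀ j, ∃ c' ∈ C, c' ≠ c ∧ A j c' c) (m : ℕ) :
    ∃ D ⊆ C, D.Nonempty ∧ ∃ R : Finset (Fin n),
      (∀ j ∉ R, ∃ c ∈ D, ∃ c' ∈ D, c' ≠ c ∧ A j c' c) ∧
      ((D.card ≤ m + 1 ∧ R = ∅) ∨ (D.card = m + 1 ∧ R.card + m ≤ n)) := by
  induction m with
  | zero =>
    obtain ⟨c, hc⟩ := hne
    refine ⟨{c}, by simpa using hc, by simp, Finset.univ, by simp, Or.inr (by simp)⟩
  | succ m ih =>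
    obtain ⟨D, hD, hDne, R, hR, h | h⟩ := ih
    · exact ⟨D, hD, hDne, R, hR, Or.inl ⟨by omega, h.2⟩⟩
    · by_cases hsh : ∀ j, ∃ c ∈ D, ∃ c' ∈ D, c' ≠ c ∧ A j c' c
      · exact ⟨D, hD, hDne, ∅, fun j _ => hsh j, Or.inl ⟨by omega, rfl⟩⟩
      · rw [not_forall] at hsh
        obtain ⟨j, hj⟩ := hsh
        have hjR : j ∈ R := by
          by_contra hc
          exact hj (hR j hc)
        obtain ⟨c, hc⟩ := hDne
        obtain ⟨c', hc', hcc, hA⟩ := hgood c (hD hc) j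
        have hc'D : c' ∉ D := fun hd => hj ⟨c, hc, c', hd, hcc, hA⟩
        refine ⟨insert c' D, Finset.insert_subset hc' hD, by simp, R.erase j, ?_, Or.inr ⟨?_, ?_⟩⟩
        · intro i hi
          by_cases hij : i = j
          · subst hij
            exact ⟨c, Finset.mem_insert_of_mem hc, c', Finset.mem_insert_self _ _, hcc, hA⟩
          · have : i ∉ R := fun hh => hi (Finset.mem_erase.2 ⟨hij, hh⟩)
            obtain ⟨a, ha, b, hb, hab⟩ := hR i this
            exact ⟨a, Finset.mem_insert_of_mem ha, b, Finset.mem_insert_of_mem hb, hab⟩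
        · rw [Finset.card_insert_of_notMem hc'D]; omega
        · have := Finset.card_erase_of_mem hjR
          have := Finset.card_pos.2 ⟨j, hjR⟩
          omega

theorem assign_aux {α : Type*} [DecidableEq α] {n s : ℕ} (D : Finset α)
    (hD : D.Nonempty) (R : Finset (Fin n)) (h : R.card ≤ D.card * s) :
    ∃ f : Fin n → α, (∀ j, f j ∈ D) ∧ ∀ c, (R.filter (fun j => f j = c)).card ≤ s := by
  have : Fintype.card R ≤ Fintype.card (D × Fin s) := by simpa using h
  obtain ⟨e⟩ := Function.Embedding.nonempty_of_card_le this
  obtain ⟨d, hd⟩ := hD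
  refine ⟨fun j => if hj : j ∈ R then ((e ⟨j, hj⟩).1 : α) else d, ?_, ?_⟩
  · intro j
    dsimp only
    split_ifs with hj
    · exact (e ⟨j, hj⟩).1.2
    · exact hd
  · intro c
    set F := R.filter (fun j => (if hj : j ∈ R then ((e ⟨j, hj⟩).1 : α) else d) = c) with hF
    have hm : ∀ j : F, (j : Fin n) ∈ R := fun j => (Finset.mem_filter.1 j.2).1
    have hv : ∀ j : F, ((e ⟨j, hm j⟩).1 : α) = c := fun j => by
      have := (Finset.mem_filter.1 j.2).2
      rwa [dif_pos (hm j)] at this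
    have hinj : Function.Injective (fun j : F => (e ⟨j, hm j⟩).2) := by
      intro a b hab
      have h1 : e ⟨a, hm a⟩ = e ⟨b, hm b⟩ :=
        Prod.ext (Subtype.ext ((hv a).trans (hv b).symm)) hab
      have := e.injective h1
      exact Subtype.ext (by simpa using this)
    simpa using Fintype.card_le_of_injective _ hinj

theorem not_ipp_aux {N q t n k : ℕ} (π : Fin N → Fin n) (C : Finset (Fin N → Fin q))
    (hC : IsIPP t C) (hk : 1 ≤ k) (hkt : k ≤ t) (hn : n + 1 ≤ k * (t + 2 - k))
    (C' : Finset (Fin N → Fin q)) (hsub : C' ⊆ C) (hne : C'.Nonempty)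
    (hgood : ∀ c ∈ C', ∀ j, ∃ c' ∈ C', c' ≠ c ∧ ∀ i, π i = j → c' i = c i) : False := by
  obtain ⟨D, hD, hDne, R, hR, hcase⟩ := grow_aux
    (fun j (c' c : Fin N → Fin q) => ∀ i, π i = j → c' i = c i) C' hne
    hgood (k - 1)
  have hDt : D.card ≤ t := by omega
  have hRc : R.card ≤ D.card * (t + 1 - D.card) := by
    rcases hcase with h | h
    · simp [h.2]
    · have hDk : D.card = k := by omega
      rw [hDk]
      have : t + 2 - k = (t + 1 - k) + 1 := by omega
      rw [this, mul_add] at hn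
      omega
  obtain ⟨f, hfD, hf⟩ := assign_aux D hDne R hRc
  have hw : ∀ j, ∃ w ∈ D, (j ∈ R → w = f j) ∧
      (j ∉ R → ∃ c' ∈ D, c' ≠ w ∧ ∀ i, π i = j → c' i = w i) := by
    intro j
    by_cases hj : j ∈ R
    · exact ⟨f j, hfD j, fun _ => rfl, fun h => absurd hj h⟩
    · obtain ⟨c, hc, h⟩ := hR j hj
      exact ⟨c, hc, fun h => absurd h hj, fun _ => h⟩
  choose w hwD hwR hwS using hw
  obtain ⟨c, hc⟩ := hC (fun i => w (π i) i)
    ⟨D, hD.trans hsub, hDt, fun i => ⟨w (π i), hwD _, rfl⟩⟩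
  have hcD : c ∈ D := hc D (hD.trans hsub) hDt (fun i => ⟨w (π i), hwD _, rfl⟩)
  choose r hrC hrne hr using hgood c (hD hcD)
  have key := hc (D.erase c ∪ (R.filter (fun j => f j = c)).image r) ?_ ?_ ?_
  · rcases Finset.mem_union.1 key with h | h
    · simp at h
    · obtain ⟨j, _, hj⟩ := Finset.mem_image.1 h
      exact hrne j hj
  · apply Finset.union_subset
    · exact (Finset.erase_subset _ _).trans (hD.trans hsub)
    · intro y hy
      obtain ⟨j, _, rfl⟩ := Finset.mem_image.1 hy
      exact hsub (hrC j)
  · have h1 := Finset.card_union_le (D.erase c) ((R.filter (fun j => f j = c)).image r)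
    have h2 : ((R.filter (fun j => f j = c)).image r).card ≤ _ := Finset.card_image_le
    have h3 := hf c
    have h4 := Finset.card_erase_of_mem hcD
    have h5 := Finset.card_pos.2 hDne
    omega
  · intro i
    by_cases hwc : w (π i) = c
    · by_cases hj : π i ∈ R
      · refine ⟨r (π i), Finset.mem_union_right _ (Finset.mem_image_of_mem _ ?_), ?_⟩
        · exact Finset.mem_filter.2 ⟨hj, (hwR _ hj).symm.trans hwc⟩
        · rw [hr (π i) i rfl]
          exact congrFun hwc i
      · obtain ⟨c', hc', hne', hag⟩ := hwS _ hj
        refine ⟨c', Finset.mem_union_left _ (Finset.mem_erase.2 ⟨?_, hc'⟩), (hag i rfl).symm⟩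
        rwa [hwc] at hne'
    · exact ⟨w (π i), Finset.mem_union_left _ (Finset.mem_erase.2 ⟨hwc, hwD _⟩), rfl⟩

theorem floor_aux (t v : ℕ) (hv : v = ⌊((t : ℝ) / 2 + 1) ^ 2⌋₊) (ht : 2 ≤ t) :
    v ≤ (t / 2 + 1) * (t + 2 - (t / 2 + 1)) ∧ 2 ≤ v := by
  constructor
  · rw [hv]
    apply Nat.lt_succ_iff.1
    rw [Nat.floor_lt (by positivity)]
    obtain ⟨s, rfl | rfl⟩ := Nat.even_or_odd' t
    · have e1 : 2 * s / 2 = s := by omega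
      have e2 : 2 * s + 2 - (s + 1) = s + 1 := by omega
      rw [e1, e2]; push_cast; nlinarith
    · have e1 : (2 * s + 1) / 2 = s := by omega
      have e2 : 2 * s + 1 + 2 - (s + 1) = s + 2 := by omega
      rw [e1, e2]; push_cast; nlinarith
  · rw [hv]
    apply Nat.le_floor
    have : (2 : ℝ) ≤ t := by exact_mod_cast ht
    push_cast; nlinarith

/-- Let `t ≥ 2` and `v = ⌊(t/2+1)²⌋`. Then every `q`-ary `t`-IPP code of length
`N` has at most `(v−1)·q^⌈N/(v−1)⌉` codewords. -/
theorem stmt_15 (N q t v : ℕ) (ht : 2 ≤ t)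
    (hv : v = ⌊((t : ℝ) / 2 + 1) ^ 2⌋₊)
    (C : Finset (Fin N → Fin q)) (hC : IsIPP t C) :
    C.card ≤ (v - 1) * q ^ (N ⌈/⌉ (v - 1)) := by
  obtain ⟨hv1, hv2⟩ := floor_aux t v hv ht
  clear hv
  obtain ⟨n, rfl⟩ : ∃ n, v = n + 1 := ⟨v - 1, by omega⟩
  rw [Nat.add_sub_cancel]
  set L := N ⌈/⌉ n with hL
  have hNL : N ≤ n * L := by
    have := le_smul_ceilDiv (show 0 < n by omega) (b := N)
    simpa using this
  rcases C.eq_empty_or_nonempty with rfl | ⟨c0, hc0⟩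
  · simp
  obtain ⟨e⟩ := Function.Embedding.nonempty_of_card_le
    (show Fintype.card (Fin N) ≤ Fintype.card (Fin n × Fin L) by simpa using hNL)
  have hfib : ∀ j : Fin n, Fintype.card {i : Fin N // (e i).1 = j} ≤ L := by
    intro j
    have hinj : Function.Injective (fun i : {i : Fin N // (e i).1 = j} => (e i.1).2) := by
      intro a b hab
      exact Subtype.ext (e.injective (Prod.ext (a.2.trans b.2.symm) hab))
    simpa using Fintype.card_le_of_injective _ hinj
  have hQ : ∀ j : Fin n, Fintype.card ({i : Fin N // (e i).1 = j} → Fin q) ≤ q ^ L := by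
    intro j
    rw [Fintype.card_fun, Fintype.card_fin]
    rcases Nat.eq_zero_or_pos N with h0 | h0
    · have : L = 0 := by rw [hL, h0]; simp
      have h := hfib j
      have h' : Fintype.card {i : Fin N // (e i).1 = j} = L := by omega
      exact le_of_eq (congrArg (fun z => q ^ z) h')
    · have hq : 0 < q := (Nat.zero_le _).trans_lt (c0 ⟨0, h0⟩).2
      exact Nat.pow_le_pow_right hq (hfib j)
  have main := deletion_aux (β := fun j : Fin n => {i : Fin N // (e i).1 = j} → Fin q)
    (fun j (c : Fin N → Fin q) => fun i => c i.1) _ C rfl ?_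
  · refine main.trans ?_
    calc _ ≤ ∑ j : Fin n, q ^ L :=
          Finset.sum_le_sum (fun j _ => (Finset.card_le_univ _).trans (hQ j))
      _ = n * q ^ L := by simp
  · intro C' hsub hne hgood
    refine not_ipp_aux (k := t / 2 + 1) (fun i => (e i).1) C hC (by omega) (by omega) hv1
      C' hsub hne ?_
    intro c hc j
    obtain ⟨c', hc', hne', h⟩ := hgood c hc j
    exact ⟨c', hc', hne', fun i hi => congrFun h ⟨i, hi⟩⟩
end

section
/- For every positive integer t, every t-cover-free family F of subsets of an N-element set with |F| > N satisfies N ≥ ((15+√33)/24)·t². Equivalently, if N*(t) denotes the minimal N such that there exists a t-cover-free family of more than N subsets of an N-element set, then N*(t) ≥ ((15+√33)/24)·t². -/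
section CF
open Finset

/-- no `s` pairwise disjoint members -/
def CFNoMatch {n : ℕ} (s : ℕ) (G : Finset (Finset (Fin n))) : Prop :=
  ∀ M ⊆ G, M.card = s → ¬ (∀ a ∈ M, ∀ b ∈ M, a ≠ b → Disjoint a b)

theorem cf_compress_eq {n : ℕ} (i j : Fin n) (a : Finset (Fin n)) :
    UV.compress {i} {j} a = if i ∉ a ∧ j ∈ a then insert i a \ {j} else a := by
  unfold UV.compress
  simp

theorem cf_noMatch_shift {n : ℕ} (s : ℕ) (G : Finset (Finset (Fin n))) (i j : Fin n) (hij : i ≠ j)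
    (h : CFNoMatch s G) : CFNoMatch s (UV.compression {i} {j} G) := by
  intro M hM hs hd
  by_cases hall : M ⊆ G
  · exact h M hall hs hd
  obtain ⟨E, hEM, hEG⟩ := Finset.not_subset.1 hall
  have hE := UV.mem_compression.1 (hM hEM)
  rcases hE with hE | ⟨_, D, hD, hDE⟩
  · exact hEG hE.1
  rw [cf_compress_eq] at hDE
  split_ifs at hDE with hc
  swap
  · exact hEG (hDE ▸ hD)
  obtain ⟨hiD, hjD⟩ := hc
  have hiE : i ∈ E := by rw [← hDE]; simp [hij]
  have hjE : j ∉ E := by rw [← hDE]; simp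
  have hnoti : ∀ H ∈ M, H ≠ E → i ∉ H := fun H hH hne hi =>
    Finset.disjoint_left.1 (hd H hH E hEM hne) hi hiE
  have hG : ∀ H ∈ M, H ≠ E → H ∈ G := by
    intro H hH hne
    rcases UV.mem_compression.1 (hM hH) with h1 | ⟨h1, b, hb, hbH⟩
    · exact h1.1
    · rw [cf_compress_eq] at hbH
      split_ifs at hbH with hc
      · exfalso
        apply hnoti H hH hne
        rw [← hbH]; simp [hij]
      · exact absurd (hbH ▸ hb) h1
  have hDsub : ∀ x ∈ D, x ≠ j → x ∈ E := by
    intro x hx hxj; rw [← hDE]; simp [hx, hxj]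
  have hDM : D ∉ M.erase E := by
    intro hDm
    rw [Finset.mem_erase] at hDm
    by_cases hD1 : ∃ x ∈ D, x ≠ j
    · obtain ⟨x, hx, hxj⟩ := hD1
      exact Finset.disjoint_left.1 (hd D hDm.2 E hEM hDm.1) hx (hDsub x hx hxj)
    · push Not at hD1
      rcases UV.mem_compression.1 (hM hDm.2) with h1 | ⟨h1, _⟩
      · apply hEG
        have := h1.2
        rw [cf_compress_eq, if_pos ⟨hiD, hjD⟩, hDE] at this
        exact this
      · exact h1 hD
  by_cases hj : ∃ H ∈ M, j ∈ H
  · obtain ⟨H, hH, hjH⟩ := hj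
    have hHE : H ≠ E := fun e => hjE (e ▸ hjH)
    have hiH := hnoti H hH hHE
    have hH' : insert i H \ {j} ∈ G := by
      rcases UV.mem_compression.1 (hM hH) with h1 | ⟨h1, _⟩
      · have := h1.2
        rwa [cf_compress_eq, if_pos ⟨hiH, hjH⟩] at this
      · exact absurd (hG H hH hHE) h1
    set H' := insert i H \ {j} with hH'def
    have hH'i : i ∈ H' := by simp [hH'def, hij]
    have hH'sub : ∀ x ∈ H', x = i ∨ (x ∈ H ∧ x ≠ j) := by
      intro x hx; simp [hH'def] at hx; tauto
    have hdE : ∀ K ∈ M, K ≠ E → K ≠ H → Disjoint K D ∧ Disjoint K H' := by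
      intro K hK h1 h2
      constructor
      · rw [Finset.disjoint_left]
        intro x hx hxD
        by_cases hxj : x = j
        · subst hxj; exact Finset.disjoint_left.1 (hd K hK H hH h2) hx hjH
        · exact Finset.disjoint_left.1 (hd K hK E hEM h1) hx (hDsub x hxD hxj)
      · rw [Finset.disjoint_left]
        intro x hx hxH
        rcases hH'sub x hxH with rfl | h3
        · exact hnoti K hK h1 hx
        · exact Finset.disjoint_left.1 (hd K hK H hH h2) hx h3.1
    have hDH' : Disjoint D H' := by
      rw [Finset.disjoint_left]
      intro x hx hxH
      rcases hH'sub x hxH with rfl | h3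
      · exact hiD hx
      · exact Finset.disjoint_left.1 (hd H hH E hEM hHE) h3.1 (hDsub x hx h3.2)
    have hDneH' : D ≠ H' := fun e => hiD (e ▸ hH'i)
    have hH'M : H' ∉ (M.erase E).erase H := by
      intro hm
      simp only [Finset.mem_erase] at hm
      exact hnoti H' hm.2.2 hm.2.1 hH'i
    have hDM' : D ∉ (M.erase E).erase H := fun hm => hDM (Finset.mem_of_mem_erase hm)
    refine h (insert D (insert H' ((M.erase E).erase H))) ?_ ?_ ?_
    · intro K hK
      simp only [Finset.mem_insert, Finset.mem_erase] at hK
      rcases hK with rfl | rfl | hK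
      · exact hD
      · exact hH'
      · exact hG K hK.2.2 hK.2.1
    · rw [Finset.card_insert_of_notMem (by
        rw [Finset.mem_insert]; push Not; exact ⟨hDneH', hDM'⟩),
        Finset.card_insert_of_notMem hH'M, Finset.card_erase_of_mem
        (Finset.mem_erase.2 ⟨hHE, hH⟩), Finset.card_erase_of_mem hEM, hs]
      have : 1 < M.card := Finset.one_lt_card.2 ⟨H, hH, E, hEM, hHE⟩
      omega
    · intro a ha b hb hab
      simp only [Finset.mem_insert, Finset.mem_erase] at ha hb
      rcases ha with rfl | rfl | ha <;> rcases hb with rfl | rfl | hb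
      · exact absurd rfl hab
      · exact hDH'
      · exact (hdE b hb.2.2 hb.2.1 hb.1).1.symm
      · exact hDH'.symm
      · exact absurd rfl hab
      · exact (hdE b hb.2.2 hb.2.1 hb.1).2.symm
      · exact (hdE a ha.2.2 ha.2.1 ha.1).1
      · exact (hdE a ha.2.2 ha.2.1 ha.1).2
      · exact hd a ha.2.2 b hb.2.2 hab
  · push Not at hj
    have hdE : ∀ K ∈ M, K ≠ E → Disjoint K D := by
      intro K hK h1
      rw [Finset.disjoint_left]
      intro x hx hxD
      by_cases hxj : x = j
      · subst hxj; exact hj K hK hx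
      · exact Finset.disjoint_left.1 (hd K hK E hEM h1) hx (hDsub x hxD hxj)
    refine h (insert D (M.erase E)) ?_ ?_ ?_
    · intro K hK
      simp only [Finset.mem_insert, Finset.mem_erase] at hK
      rcases hK with rfl | hK
      · exact hD
      · exact hG K hK.2 hK.1
    · rw [Finset.card_insert_of_notMem hDM, Finset.card_erase_of_mem hEM, hs]
      have : 0 < M.card := Finset.card_pos.2 ⟨E, hEM⟩
      omega
    · intro a ha b hb hab
      simp only [Finset.mem_insert, Finset.mem_erase] at ha hb
      rcases ha with rfl | ha <;> rcases hb with rfl | hb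
      · exact absurd rfl hab
      · exact (hdE b hb.2 hb.1).symm
      · exact hdE a ha.2 ha.1
      · exact hd a ha.2 b hb.2 hab

theorem cf_card_shift {n : ℕ} (i j : Fin n) (G : Finset (Finset (Fin n)))
    (h2 : ∀ e ∈ G, e.card = 2) : ∀ e ∈ UV.compression {i} {j} G, e.card = 2 := by
  intro e he
  rcases UV.mem_compression.1 he with h1 | ⟨_, b, hb, hbe⟩
  · exact h2 e h1.1
  · rw [← hbe, UV.card_compress (by simp)]; exact h2 b hb

def cfW {n : ℕ} (G : Finset (Finset (Fin n))) : ℕ := ∑ e ∈ G, ∑ x ∈ e, (x : ℕ)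

theorem cf_weight_shift {n : ℕ} (i j : Fin n) (hij : i < j) (G : Finset (Finset (Fin n)))
    (e : Finset (Fin n)) (he : e ∈ G) (hi : i ∉ e) (hj : j ∈ e) (hne : insert i e \ {j} ∉ G) :
    cfW (UV.compression {i} {j} G) < cfW G := by
  classical
  set c := UV.compress ({i} : Finset (Fin n)) {j} with hc
  let g : Finset (Fin n) → Finset (Fin n) := fun a => if c a ∈ G then a else c a
  have hinj : Set.InjOn c {a | c a ∉ G ∧ a ∈ G} := by
    intro a ha b hb hab
    have key : ∀ a, c a ∉ G → a ∈ G → i ∉ a ∧ j ∈ a ∧ c a = insert i a \ {j} := by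
      intro a h1 h2
      have := cf_compress_eq i j a
      rw [← hc] at this
      split_ifs at this with h3
      · exact ⟨h3.1, h3.2, this⟩
      · exact absurd (by rw [this]; exact h2) h1
    obtain ⟨a1, a2, a3⟩ := key a ha.1 ha.2
    obtain ⟨b1, b2, b3⟩ := key b hb.1 hb.2
    rw [a3, b3] at hab
    ext x
    have := Finset.ext_iff.1 hab x
    simp only [Finset.mem_sdiff, Finset.mem_insert, Finset.mem_singleton] at this
    by_cases hx : x = j
    · subst hx; tauto
    · by_cases hxi : x = i
      · subst hxi; tauto
      · tauto
  have hwt : ∀ a, i ∉ a → j ∈ a → ∑ x ∈ insert i a \ {j}, (x : ℕ) < ∑ x ∈ a, (x : ℕ) := by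
    intro a h1 h2
    have e1 : insert i a \ {j} = insert i (a.erase j) := by
      ext x; simp only [Finset.mem_sdiff, Finset.mem_insert, Finset.mem_singleton, Finset.mem_erase]
      constructor
      · tauto
      · rintro (rfl | h)
        · exact ⟨Or.inl rfl, hij.ne⟩
        · tauto
    rw [e1, Finset.sum_insert (by simp [h1])]
    rw [← Finset.add_sum_erase a (fun x : Fin n => (x : ℕ)) h2]
    have : (i : ℕ) < j := hij
    simpa using this
  have himg : UV.compression {i} {j} G = G.image g := by
    ext a
    rw [UV.mem_compression, Finset.mem_image]
    constructor
    · rintro (⟨h1, h2⟩ | ⟨h1, b, hb, hba⟩)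
      · exact ⟨a, h1, if_pos h2⟩
      · refine ⟨b, hb, ?_⟩
        rw [← hba] at h1 ⊢
        exact if_neg h1
    · rintro ⟨b, hb, hba⟩
      by_cases h : c b ∈ G
      · simp only [g, if_pos h] at hba
        subst hba; exact Or.inl ⟨hb, h⟩
      · simp only [g, if_neg h] at hba
        subst hba; exact Or.inr ⟨h, b, hb, rfl⟩
  have hginj : Set.InjOn g G := by
    intro a ha b hb hab
    have ha' : a ∈ G := ha
    have hb' : b ∈ G := hb
    by_cases h1 : c a ∈ G <;> by_cases h2 : c b ∈ G <;> simp only [g, h1, h2, if_true, if_false] at hab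
    · exact hab
    · exact absurd (hab ▸ ha') h2
    · exact absurd (hab ▸ hb') h1
    · exact hinj ⟨h1, ha'⟩ ⟨h2, hb'⟩ hab
  unfold cfW
  rw [himg, Finset.sum_image hginj]
  apply Finset.sum_lt_sum
  · intro a ha
    by_cases h1 : c a ∈ G
    · simp only [g, if_pos h1]; exact le_rfl
    · simp only [g, if_neg h1]
      rw [hc, cf_compress_eq]
      split_ifs with h3
      · exact (hwt a h3.1 h3.2).le
      · exact le_rfl
  · refine ⟨e, he, ?_⟩
    have : c e = insert i e \ {j} := by rw [hc, cf_compress_eq, if_pos ⟨hi, hj⟩]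
    simp only [g, this, if_neg hne]
    exact hwt e hi hj

theorem cf_exists_stable {n : ℕ} (s : ℕ) (w : ℕ) : ∀ (G : Finset (Finset (Fin n))), cfW G = w →
    (∀ e ∈ G, e.card = 2) → CFNoMatch s G →
    ∃ G' : Finset (Finset (Fin n)), G'.card = G.card ∧ (∀ e ∈ G', e.card = 2) ∧ CFNoMatch s G' ∧
      ∀ i j, i < j → ∀ e ∈ G', i ∉ e → j ∈ e → insert i e \ {j} ∈ G' := by
  induction w using Nat.strong_induction_on with
  | _ w ih =>
    intro G hw h2 hm
    by_cases hst : ∀ i j, i < j → ∀ e ∈ G, i ∉ e → j ∈ e → insert i e \ {j} ∈ G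
    · exact ⟨G, rfl, h2, hm, hst⟩
    · push Not at hst
      obtain ⟨i, j, hij, e, he, hi, hj, hne⟩ := hst
      obtain ⟨G', h1, h3⟩ := ih _ (hw ▸ cf_weight_shift i j hij G e he hi hj hne)
        (UV.compression {i} {j} G) rfl (cf_card_shift i j G h2) (cf_noMatch_shift s G i j hij.ne hm)
      exact ⟨G', by rw [h1, UV.card_compression], h3⟩

theorem cf_pair {n : ℕ} {G : Finset (Finset (Fin n))}
    (hst : ∀ i j, i < j → ∀ e ∈ G, i ∉ e → j ∈ e → insert i e \ {j} ∈ G)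
    {a b k l : Fin n} (hkl : k < l) (hab : a < b) (hka : k ≤ a) (hlb : l ≤ b)
    (h : ({a, b} : Finset (Fin n)) ∈ G) : ({k, l} : Finset (Fin n)) ∈ G := by
  have h1 : ({k, b} : Finset (Fin n)) ∈ G := by
    rcases hka.eq_or_lt with rfl | hka
    · exact h
    · have := hst k a hka _ h (by simp [hka.ne, (hka.trans hab).ne]) (by simp)
      convert this using 1
      ext x
      simp only [Finset.mem_sdiff, Finset.mem_insert, Finset.mem_singleton]
      constructor
      · rintro (rfl | rfl)
        · exact ⟨by simp, hka.ne⟩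
        · exact ⟨by simp, hab.ne'⟩
      · tauto
  rcases hlb.eq_or_lt with rfl | hlb
  · exact h1
  · have := hst l b hlb _ h1 (by simp [hlb.ne, hkl.ne']) (by simp)
    convert this using 1
    ext x
    simp only [Finset.mem_sdiff, Finset.mem_insert, Finset.mem_singleton]
    constructor
    · rintro (rfl | rfl)
      · exact ⟨by simp, (hkl.trans hlb).ne⟩
      · exact ⟨by simp, hlb.ne⟩
    · tauto

/-- Erdős–Gallai -/
theorem cf_EG {n : ℕ} (s : ℕ) (hn : 2 * s ≤ n) (G : Finset (Finset (Fin n)))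
    (h2 : ∀ e ∈ G, e.card = 2) (hm : CFNoMatch s G) :
    ∃ k < s, G.card + (n - k).choose 2 ≤ n.choose 2 + (2 * s - 1 - 2 * k).choose 2 := by
  obtain ⟨G', hc, h2', hm', hst⟩ := cf_exists_stable s _ G rfl h2 hm
  rw [← hc]
  clear hc hm h2 G
  rename' G' => G
  let p : Fin s → Fin n := fun k => ⟨k, by omega⟩
  let q : Fin s → Fin n := fun k => ⟨2 * s - 1 - k, by omega⟩
  have hpq : ∀ k, p k < q k := fun k => by simp only [p, q, Fin.mk_lt_mk]; omega
  have hdisj : ∀ k k', k ≠ k' → Disjoint ({p k, q k} : Finset (Fin n)) {p k', q k'} := by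
    intro k k' h
    have : (k : ℕ) ≠ k' := fun e => h (Fin.ext e)
    simp only [p, q, Finset.disjoint_insert_left, Finset.disjoint_singleton_left,
      Finset.mem_insert, Finset.mem_singleton, Fin.mk.injEq]
    omega
  have hex : ∃ k, ({p k, q k} : Finset (Fin n)) ∉ G := by
    by_contra hcon
    push Not at hcon
    have hinj : Function.Injective (fun k => ({p k, q k} : Finset (Fin n))) := by
      intro k k' h
      by_contra hne
      have := hdisj k k' hne
      simp only at h
      rw [h] at this
      simp at this
    refine hm' (univ.image (fun k => ({p k, q k} : Finset (Fin n)))) ?_ ?_ ?_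
    · intro e he
      obtain ⟨k, _, rfl⟩ := Finset.mem_image.1 he
      exact hcon k
    · rw [Finset.card_image_of_injective _ hinj]; simp
    · intro a ha b hb hab
      obtain ⟨k, _, rfl⟩ := Finset.mem_image.1 ha
      obtain ⟨k', _, rfl⟩ := Finset.mem_image.1 hb
      exact hdisj k k' (fun e => hab (by rw [e]))
  obtain ⟨k, hk⟩ := hex
  refine ⟨k, k.2, ?_⟩
  have hsub : powersetCard 2 (Ico (p k) (q k)) ⊆ powersetCard 2 (Ici (p k)) :=
    powersetCard_mono (fun x hx => by simp at hx ⊢; exact hx.1)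
  have hdis : Disjoint G (powersetCard 2 (Ici (p k)) \ powersetCard 2 (Ico (p k) (q k))) := by
    rw [Finset.disjoint_left]
    intro e heG he
    simp only [Finset.mem_sdiff, Finset.mem_powersetCard, not_and] at he
    obtain ⟨⟨he1, he2⟩, he3⟩ := he
    have he3' : ¬ e ⊆ Ico (p k) (q k) := fun h => he3 h he2
    obtain ⟨a, b, hab, rfl⟩ : ∃ a b, a < b ∧ e = {a, b} := by
      obtain ⟨a, b, hab, rfl⟩ := Finset.card_eq_two.1 he2
      rcases lt_or_gt_of_ne hab with h | h
      · exact ⟨a, b, h, rfl⟩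
      · exact ⟨b, a, h, Finset.pair_comm a b⟩
    have ha : p k ≤ a := by simpa using he1 (show a ∈ ({a, b} : Finset (Fin n)) by simp)
    have hb : q k ≤ b := by
      by_contra hb
      push Not at hb
      apply he3'
      intro x hx
      simp only [Finset.mem_insert, Finset.mem_singleton] at hx
      rw [Finset.mem_Ico]
      rcases hx with rfl | rfl
      · exact ⟨ha, hab.trans hb⟩
      · exact ⟨ha.trans hab.le, hb⟩
    exact hk (cf_pair hst (hpq k) hab ha hb heG)
  have hle : (G ∪ (powersetCard 2 (Ici (p k)) \ powersetCard 2 (Ico (p k) (q k)))).card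
      ≤ (powersetCard 2 (univ : Finset (Fin n))).card := by
    apply Finset.card_le_card
    intro e he
    rw [Finset.mem_powersetCard]
    refine ⟨Finset.subset_univ _, ?_⟩
    simp only [Finset.mem_union, Finset.mem_sdiff, Finset.mem_powersetCard] at he
    rcases he with he | he
    · exact h2' e he
    · exact he.1.2
  rw [Finset.card_union_of_disjoint hdis, Finset.card_sdiff_of_subset hsub] at hle
  simp only [Finset.card_powersetCard, Fin.card_Ici, Fin.card_Ico, Finset.card_univ,
    Fintype.card_fin, p, q] at hle
  have e1 : 2 * s - 1 - (k : ℕ) - k = 2 * s - 1 - 2 * k := by omega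
  rw [e1] at hle
  omega

theorem cf_mem_sup {α : Type*} [DecidableEq α] {T : Finset (Finset α)} {x : α} :
    x ∈ T.sup id ↔ ∃ B ∈ T, x ∈ B := by
  simp [Finset.mem_sup]

/-- a cover by a collection of non-own subsets -/
theorem cf_cover {α : Type*} [DecidableEq α] {t : ℕ} {F : Finset (Finset α)}
    (hF : IsCoverFree t F) {A : Finset α} (hA : A ∈ F) (P : Finset (Finset α)) (hP : P.card ≤ t)
    (hno : ∀ p ∈ P, ∃ B ∈ F, B ≠ A ∧ p ⊆ B) (hcov : ∀ x ∈ A, ∃ p ∈ P, x ∈ p) : False := by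
  choose! f hf1 hf2 hf3 using hno
  refine hF A hA (P.image f) ?_ (Finset.card_image_le.trans hP) ?_
  · intro B hB
    obtain ⟨p, hp, rfl⟩ := Finset.mem_image.1 hB
    exact Finset.mem_erase.2 ⟨hf2 p hp, hf1 p hp⟩
  · intro x hx
    obtain ⟨p, hp, hxp⟩ := hcov x hx
    exact cf_mem_sup.2 ⟨f p, Finset.mem_image_of_mem f hp, hf3 p hp hxp⟩

theorem cf_erase {α : Type*} [DecidableEq α] {t : ℕ} {F : Finset (Finset α)}
    (hF : IsCoverFree t F) (A : Finset α) : IsCoverFree t (F.erase A) := by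
  intro A₀ hA₀ T hT hc
  exact hF A₀ (Finset.mem_of_mem_erase hA₀) T
    (hT.trans (Finset.erase_subset_erase _ (Finset.erase_subset _ _))) hc

theorem cf_restrict {α : Type*} [DecidableEq α] {t : ℕ} {F : Finset (Finset α)}
    (hF : IsCoverFree (t + 1) F) {A : Finset α} (hA : A ∈ F) :
    IsCoverFree t ((F.erase A).image (· \ A)) := by
  intro A₀ hA₀ T hT hc hsub
  obtain ⟨B, hB, rfl⟩ := Finset.mem_image.1 hA₀
  have : ∀ C ∈ T, ∃ D ∈ F, D ≠ B ∧ D \ A = C := by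
    intro C hC
    have := Finset.mem_erase.1 (hT hC)
    obtain ⟨D, hD, rfl⟩ := Finset.mem_image.1 this.2
    exact ⟨D, Finset.mem_of_mem_erase hD, fun e => this.1 (by rw [e]), rfl⟩
  choose! f hf1 hf2 hf3 using this
  rw [Finset.mem_erase] at hB
  refine hF B hB.2 (insert A (T.image f)) ?_ ?_ ?_
  · intro D hD
    rw [Finset.mem_insert] at hD
    rcases hD with rfl | hD
    · exact Finset.mem_erase.2 ⟨hB.1.symm, hA⟩
    · obtain ⟨C, hC, rfl⟩ := Finset.mem_image.1 hD
      exact Finset.mem_erase.2 ⟨hf2 C hC, hf1 C hC⟩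
  · exact (Finset.card_insert_le _ _).trans (by
      have := Finset.card_image_le (s := T) (f := f); omega)
  · intro x hx
    rw [cf_mem_sup]
    by_cases hxA : x ∈ A
    · exact ⟨A, Finset.mem_insert_self _ _, hxA⟩
    · obtain ⟨C, hC, hxC⟩ := cf_mem_sup.1 (hsub (Finset.mem_sdiff.2 ⟨hx, hxA⟩))
      refine ⟨f C, Finset.mem_insert_of_mem (Finset.mem_image_of_mem f hC), ?_⟩
      rw [← hf3 C hC] at hxC
      exact (Finset.mem_sdiff.1 hxC).1

theorem cf_restrict_card {α : Type*} [DecidableEq α] {t : ℕ} {F : Finset (Finset α)}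
    (hF : IsCoverFree (t + 2) F) {A : Finset α} (hA : A ∈ F) :
    ((F.erase A).image (· \ A)).card = F.card - 1 := by
  rw [Finset.card_image_of_injOn, Finset.card_erase_of_mem hA]
  intro B hB C hC hBC
  have hB' := Finset.mem_erase.1 hB
  have hC' := Finset.mem_erase.1 hC
  by_contra hne
  refine hF B hB'.2 {A, C} ?_ ?_ ?_
  · intro D hD
    simp only [Finset.mem_insert, Finset.mem_singleton] at hD
    rcases hD with rfl | rfl
    · exact Finset.mem_erase.2 ⟨hB'.1.symm, hA⟩
    · exact Finset.mem_erase.2 ⟨Ne.symm hne, hC'.2⟩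
  · exact (Finset.card_le_two).trans (by omega)
  · intro x hx
    rw [cf_mem_sup]
    by_cases hxA : x ∈ A
    · exact ⟨A, by simp, hxA⟩
    · refine ⟨C, by simp, ?_⟩
      have : x ∈ B \ A := Finset.mem_sdiff.2 ⟨hx, hxA⟩
      simp only at hBC
      rw [hBC] at this
      exact (Finset.mem_sdiff.1 this).1

/-- own pairs -/
def cfOwn {α : Type*} [DecidableEq α] (F : Finset (Finset α)) (A : Finset α) :
    Finset (Finset α) :=
  (powersetCard 2 A).filter (fun p => ∀ B ∈ F, B ≠ A → ¬ p ⊆ B)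

theorem cf_choose_two (a : ℕ) : (2 : ℤ) * (a.choose 2 : ℕ) = a * (a - 1) := by
  have h := Nat.choose_two_right a
  have h2 : 2 * a.choose 2 = a * (a - 1) := by
    rw [h]; exact Nat.mul_div_cancel' (Nat.even_mul_pred_self a).two_dvd
  rcases a with _ | a
  · simp
  · have : ((2 * (a+1).choose 2 : ℕ) : ℤ) = (((a + 1) * (a + 1 - 1) : ℕ) : ℤ) := by rw [h2]
    push_cast [Nat.add_sub_cancel] at this ⊢
    linarith

theorem cf_own_bound {α : Type*} [DecidableEq α] {t : ℕ} {F : Finset (Finset α)}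
    (hF : IsCoverFree t F) {A : Finset α} (hA : A ∈ F)
    (hno : ∀ x ∈ A, ∃ B ∈ F, B ≠ A ∧ x ∈ B) (m : ℕ) (hm : A.card = t + m) (hmt : m ≤ t) :
    ∃ j : ℕ, 1 ≤ j ∧ j ≤ m ∧
      (t : ℤ) ^ 2 + 2 * t * j - 3 * j ^ 2 - t + 5 * j - 2 ≤ 2 * (cfOwn F A).card := by
  classical
  let e : Fin (t + m) ↪ α := (A.equivFinOfCardEq hm).symm.toEmbedding.trans
    (Function.Embedding.subtype _)
  have heA : ∀ i, e i ∈ A := fun i => ((A.equivFinOfCardEq hm).symm i).2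
  have hsurj : ∀ x ∈ A, ∃ i, e i = x := fun x hx =>
    ⟨A.equivFinOfCardEq hm ⟨x, hx⟩, by simp [e]⟩
  let Q : Finset (Fin (t + m)) → Prop := fun p => ∃ B ∈ F, B ≠ A ∧ p.map e ⊆ B
  let G := (powersetCard 2 (univ : Finset (Fin (t + m)))).filter Q
  have hG2 : ∀ p ∈ G, p.card = 2 := fun p hp =>
    (Finset.mem_powersetCard.1 (Finset.mem_filter.1 hp).1).2
  have hGm : CFNoMatch m G := by
    intro M hM hMc hd
    let R : Finset (Fin (t + m)) := univ \ M.sup id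
    have hsupc : (M.sup id).card = 2 * m := by
      rw [Finset.sup_eq_biUnion, Finset.card_biUnion (t := id) (fun a ha b hb hab => hd a ha b hb hab)]
      rw [Finset.sum_congr rfl (fun p hp => (hG2 p (hM hp) : (id p).card = 2))]
      simp [hMc, mul_comm]
    have hRc : R.card = t - m := by
      simp only [R]
      rw [Finset.card_sdiff_of_subset (Finset.subset_univ _), hsupc]
      simp; omega
    refine cf_cover hF hA (M.image (Finset.map e) ∪ R.image (fun i => {e i})) ?_ ?_ ?_
    · have h1 := Finset.card_image_le (s := M) (f := Finset.map e)
      have h2 := Finset.card_image_le (s := R) (f := fun i => ({e i} : Finset α))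
      refine (Finset.card_union_le _ _).trans ?_
      omega
    · intro p hp
      rw [Finset.mem_union, Finset.mem_image, Finset.mem_image] at hp
      rcases hp with ⟨q, hq, rfl⟩ | ⟨i, hi, rfl⟩
      · exact (Finset.mem_filter.1 (hM hq)).2
      · obtain ⟨B, hB, hBA, hx⟩ := hno (e i) (heA i)
        exact ⟨B, hB, hBA, by simpa using hx⟩
    · intro x hx
      obtain ⟨i, rfl⟩ := hsurj x hx
      by_cases hi : i ∈ M.sup id
      · obtain ⟨p, hp, hip⟩ := cf_mem_sup.1 hi
        exact ⟨p.map e, Finset.mem_union_left _ (Finset.mem_image_of_mem _ hp),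
          Finset.mem_map_of_mem e hip⟩
      · exact ⟨{e i}, Finset.mem_union_right _ (Finset.mem_image.2
          ⟨i, Finset.mem_sdiff.2 ⟨Finset.mem_univ _, hi⟩, rfl⟩), by simp⟩
  obtain ⟨k, hk, hle⟩ := cf_EG m (by omega) G hG2 hGm
  have hcompl : (t + m).choose 2 ≤ G.card + (cfOwn F A).card := by
    have h1 := Finset.card_filter_add_card_filter_not
      (s := powersetCard 2 (univ : Finset (Fin (t + m)))) Q
    rw [Finset.card_powersetCard, Finset.card_univ, Fintype.card_fin] at h1
    rw [← h1]
    apply Nat.add_le_add_left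
    apply Finset.card_le_card_of_injOn (Finset.map e)
    · intro p hp
      have hp' := Finset.mem_filter.1 hp
      have hp2 := Finset.mem_powersetCard.1 hp'.1
      refine Finset.mem_filter.2 ⟨Finset.mem_powersetCard.2 ⟨?_, by simp [hp2.2]⟩, ?_⟩
      · intro x hx
        obtain ⟨i, _, rfl⟩ := Finset.mem_map.1 hx
        exact heA i
      · intro B hB hBA hs
        exact hp'.2 ⟨B, hB, hBA, hs⟩
    · exact (Finset.map_injective e).injOn
  refine ⟨m - k, by omega, by omega, ?_⟩
  have c1 := cf_choose_two (t + m - k)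
  have c2 := cf_choose_two (2 * m - 1 - 2 * k)
  obtain ⟨j, rfl⟩ : ∃ j, m = k + 1 + j := ⟨m - k - 1, by omega⟩
  have e1 : t + (k + 1 + j) - k = t + j + 1 := by omega
  have e2 : 2 * (k + 1 + j) - 1 - 2 * k = 2 * j + 1 := by omega
  have e3 : k + 1 + j - k = j + 1 := by omega
  rw [e1] at c1 hle
  rw [e2] at c2 hle
  rw [e3]
  have h3 : (t + j + 1).choose 2 ≤ (cfOwn F A).card + (2 * j + 1).choose 2 := by omega
  zify at h3
  push_cast at c1 c2 ⊢
  nlinarith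

theorem cf_own_sum {α : Type*} [DecidableEq α] {F : Finset (Finset α)} {X : Finset α}
    (hX : ∀ A ∈ F, A ⊆ X) : ∑ A ∈ F, (cfOwn F A).card ≤ X.card.choose 2 := by
  rw [← Finset.card_powersetCard, ← Finset.card_biUnion]
  · apply Finset.card_le_card
    intro p hp
    obtain ⟨A, hA, hpA⟩ := Finset.mem_biUnion.1 hp
    exact Finset.powersetCard_mono (hX A hA) (Finset.mem_filter.1 hpA).1
  · intro A hA B hB hAB
    rw [Function.onFun, Finset.disjoint_left]
    intro p hpA hpB
    exact (Finset.mem_filter.1 hpA).2 B hB hAB.symm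
      (Finset.mem_powersetCard.1 (Finset.mem_filter.1 hpB).1).1

theorem cf_real (c t j : ℝ) (hc : 12 * c ^ 2 - 15 * c + 4 = 0) (hc1 : 0.86 ≤ c) (hc2 : c ≤ 0.87)
    (ht : 2 ≤ t) (hj : 1 ≤ j) (hjm : t + j ≤ c * (2 * t - 1)) :
    c * t ^ 2 - 1 ≤ t ^ 2 + 2 * t * j - 3 * j ^ 2 - t + 5 * j - 2 := by
  obtain ⟨m, hm⟩ : ∃ m, m = (2 * c - 1) * t - c := ⟨_, rfl⟩
  have hjm' : j ≤ m := by rw [hm]; linarith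
  have h1 : 0 ≤ (j - 1) * (m - j) := mul_nonneg (by linarith) (by linarith)
  have hL1 : c * t ^ 2 ≤ (2 * t + 2 - 3 * m) * 1 + (t ^ 2 - t - 1 + 3 * m) := by nlinarith
  have hLm : c * t ^ 2 ≤ (2 * t + 2 - 3 * m) * m + (t ^ 2 - t - 1 + 3 * m) := by
    have : (2 * t + 2 - 3 * m) * m + (t ^ 2 - t - 1 + 3 * m) - c * t ^ 2
        = (17 * c - 10) * t - 3 * c ^ 2 - 5 * c - 1
          - (12 * c ^ 2 - 15 * c + 4) * (t ^ 2 - t) := by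
      rw [hm]; ring
    rw [hc] at this
    nlinarith
  have hLj : c * t ^ 2 ≤ (2 * t + 2 - 3 * m) * j + (t ^ 2 - t - 1 + 3 * m) := by
    rcases le_total 0 (2 * t + 2 - 3 * m) with h | h
    · nlinarith
    · nlinarith
  nlinarith

theorem cf_main {α : Type*} [DecidableEq α] (c : ℝ) (hc : 12 * c ^ 2 - 15 * c + 4 = 0)
    (hc1 : 0.86 ≤ c) (hc2 : c ≤ 0.87) (t : ℕ) : ∀ (k : ℕ) (F : Finset (Finset α)) (X : Finset α),
    F.card = k → IsCoverFree t F → (∀ A ∈ F, A ⊆ X) → X.card < F.card →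
    c * (t : ℝ) ^ 2 ≤ X.card := by
  induction t with
  | zero => intro k F X _ _ _ _; simp
  | succ t iht =>
  intro k
  induction k with
  | zero => intro F X h1 _ _ h2; omega
  | succ k ihk =>
  intro F X hk hF hX hcard
  have hne : ∀ A ∈ F, A.Nonempty := by
    intro A hA
    by_contra h
    rw [Finset.not_nonempty_iff_eq_empty] at h
    exact hF A hA ∅ (by simp) (by simp) (by simp [h])
  have hF0 : F.Nonempty := Finset.card_pos.1 (by omega)
  have hXpos : 1 ≤ X.card := by
    obtain ⟨A, hA⟩ := hF0
    exact Finset.card_pos.2 ((hne A hA).mono (hX A hA))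
  have hXr : (1 : ℝ) ≤ X.card := by exact_mod_cast hXpos
  rcases Nat.eq_zero_or_pos t with rfl | htpos
  · norm_num; linarith
  obtain ⟨u, rfl⟩ : ∃ u, t = u + 1 := ⟨t - 1, by omega⟩
  -- own points
  by_cases hown : ∃ A ∈ F, ∃ x ∈ A, ∀ B ∈ F, B ≠ A → x ∉ B
  · obtain ⟨A, hA, x, hx, hB⟩ := hown
    have hxX := hX A hA hx
    have h := ihk (F.erase A) (X.erase x) (by rw [Finset.card_erase_of_mem hA]; omega)
      (cf_erase hF A) ?_ ?_
    · rw [Finset.card_erase_of_mem hxX] at h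
      refine h.trans ?_
      exact_mod_cast Nat.sub_le _ _
    · intro B hB'
      rw [Finset.mem_erase] at hB'
      exact Finset.subset_erase.2 ⟨hX B hB'.2, hB B hB'.2 hB'.1⟩
    · rw [Finset.card_erase_of_mem hA, Finset.card_erase_of_mem hxX]; omega
  push Not at hown
  -- big set
  by_cases hbig : ∃ A ∈ F, c * (2 * ((u + 1 + 1 : ℕ) : ℝ) - 1) ≤ A.card
  · obtain ⟨A, hA, hAc⟩ := hbig
    have hAX := Finset.card_sdiff_add_card_eq_card (hX A hA)
    have hApos := Finset.card_pos.2 (hne A hA)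
    have h := iht _ ((F.erase A).image (· \ A)) (X \ A) rfl (cf_restrict hF hA) ?_ ?_
    · have : (X.card : ℝ) = (X \ A).card + A.card := by exact_mod_cast hAX.symm
      rw [this]
      push_cast at h hAc ⊢
      nlinarith
    · intro B hB
      obtain ⟨D, hD, rfl⟩ := Finset.mem_image.1 hB
      exact Finset.sdiff_subset_sdiff (hX D (Finset.mem_of_mem_erase hD)) le_rfl
    · rw [cf_restrict_card hF hA]; omega
  push Not at hbig
  by_contra hcon
  push Not at hcon
  obtain ⟨t, ht⟩ : ∃ t, t = u + 1 + 1 := ⟨_, rfl⟩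
  rw [← ht] at hF hbig hcon
  have ht2 : (2 : ℝ) ≤ t := by rw [ht]; push_cast; linarith [(Nat.cast_nonneg u : (0 : ℝ) ≤ u)]
  have hbd : ∀ A ∈ F, c * (t : ℝ) ^ 2 - 1 ≤ 2 * (cfOwn F A).card := by
    intro A hA
    have hlow : t + 1 ≤ A.card := by
      by_contra hlt
      refine cf_cover hF hA (A.image (fun x => {x})) ?_ ?_ ?_
      · exact Finset.card_image_le.trans (by omega)
      · intro p hp
        obtain ⟨x, hx, rfl⟩ := Finset.mem_image.1 hp
        obtain ⟨B, h1, h2, h3⟩ := hown A hA x hx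
        exact ⟨B, h1, h2, by simpa using h3⟩
      · intro x hx
        exact ⟨{x}, Finset.mem_image.2 ⟨x, hx, rfl⟩, by simp⟩
    obtain ⟨m, hm⟩ : ∃ m, A.card = t + m := ⟨A.card - t, by omega⟩
    have hb := hbig A hA
    rw [hm] at hb
    push_cast at hb
    have hmt : m ≤ t := by
      have : (m : ℝ) ≤ t := by nlinarith
      exact_mod_cast this
    obtain ⟨j, hj1, hjm, hj⟩ := cf_own_bound hF hA (hown A hA) m hm hmt
    have hjR : ((t : ℝ) ^ 2 + 2 * t * j - 3 * j ^ 2 - t + 5 * j - 2) ≤ 2 * (cfOwn F A).card := by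
      exact_mod_cast hj
    have hj1' : (1 : ℝ) ≤ j := by exact_mod_cast hj1
    have hjm' : (j : ℝ) ≤ m := by exact_mod_cast hjm
    exact (cf_real c t j hc hc1 hc2 ht2 hj1' (by linarith)).trans hjR
  have hsum := cf_own_sum hX
  have hsumR : (∑ A ∈ F, ((cfOwn F A).card : ℝ)) ≤ (X.card.choose 2 : ℕ) := by exact_mod_cast hsum
  have hch : (2 : ℝ) * (X.card.choose 2 : ℕ) = X.card * (X.card - 1) := by
    exact_mod_cast cf_choose_two X.card
  have hs2 : (F.card : ℝ) * (c * (t : ℝ) ^ 2 - 1) ≤ 2 * ∑ A ∈ F, ((cfOwn F A).card : ℝ) := by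
    rw [Finset.mul_sum, ← nsmul_eq_mul]
    exact Finset.card_nsmul_le_sum _ _ _ hbd
  have hFc : (X.card : ℝ) + 1 ≤ F.card := by exact_mod_cast hcard
  nlinarith

end CF

/-- For every positive integer `t`, every `t`-cover-free family of more than `N`
subsets of an `N`-element set satisfies `N ≥ ((15+√33)/24)·t²`. -/
theorem stmt_16 (t N : ℕ) (ht : 1 ≤ t) (F : Finset (Finset (Fin N)))
    (hF : IsCoverFree t F) (hcard : N < F.card) :
    (15 + Real.sqrt 33) / 24 * (t : ℝ) ^ 2 ≤ (N : ℝ) := by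
  have h33 : Real.sqrt 33 ^ 2 = 33 := Real.sq_sqrt (by norm_num)
  have h1 : (5.7 : ℝ) ≤ Real.sqrt 33 := Real.le_sqrt_of_sq_le (by norm_num)
  have h2 : Real.sqrt 33 ≤ 5.8 := Real.sqrt_le_iff.2 ⟨by norm_num, by norm_num⟩
  have := cf_main ((15 + Real.sqrt 33) / 24) (by nlinarith) (by linarith) (by linarith) t _ F
    Finset.univ rfl hF (fun A _ => Finset.subset_univ A) (by simpa using hcard)
  simpa using this
end

section
/- For every positive integer N there exists a constant c (depending only on N) such that for every alphabet size q, every q-ary 2-traceability code of length N has at most c·q^⌈N/4⌉ codewords; that is, M_TA(N,q,2) ≤ c·q^⌈N/4⌉. -/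
lemma aux_sun (N : ℕ) (I : Finset (Fin N)) : ∀ L : ℕ, ∃ K : ℕ, ∀ q : ℕ, ∀ D : Finset (Fin N → Fin q),
    K ≤ D.card → ∃ G ⊆ D, L ≤ G.card ∧ ∀ i ∈ I, (∀ g ∈ G, ∀ h ∈ G, g i = h i) ∨
      (∀ g ∈ G, ∀ h ∈ G, g i = h i → g = h) := by
  induction I using Finset.induction_on with
  | empty => exact fun L => ⟨L, fun q D h => ⟨D, subset_rfl, h, by simp⟩⟩
  | insert i I hi ih =>
    intro L
    obtain ⟨K, hK⟩ := ih L
    refine ⟨K * K + 1, fun q D hD => ?_⟩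
    by_cases h : ∃ v, K ≤ (D.filter (fun g => g i = v)).card
    · obtain ⟨v, hv⟩ := h
      obtain ⟨G, hG, hL, hd⟩ := hK q _ hv
      refine ⟨G, hG.trans (Finset.filter_subset _ _), hL, ?_⟩
      intro j hj
      rcases Finset.mem_insert.1 hj with rfl | hj
      · left
        intro g hg h hh
        rw [(Finset.mem_filter.1 (hG hg)).2, (Finset.mem_filter.1 (hG hh)).2]
      · exact hd j hj
    · push Not at h
      have h1 : D.card ≤ K * (D.image (fun g => g i)).card :=
        Finset.card_le_mul_card_image D K (fun v _ => (h v).le)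
      have h2 : K ≤ (D.image (fun g => g i)).card := by
        by_contra hc
        have := Nat.mul_le_mul_left K (not_le.1 hc).le
        omega
      obtain ⟨E', hED', hE⟩ := Set.exists_subset_bijOn (D : Set (Fin N → Fin q)) (fun g => g i)
      lift E' to Finset (Fin N → Fin q) using D.finite_toSet.subset hED' with E
      have hED : E ⊆ D := by exact_mod_cast hED'
      have hEc : E.card = (D.image (fun g => g i)).card := by
        rw [← Finset.card_image_of_injOn hE.injOn]
        congr 1
        apply Finset.coe_injective
        rw [Finset.coe_image, hE.image_eq, Finset.coe_image]
      obtain ⟨G, hG, hL, hd⟩ := hK q E (by omega)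
      refine ⟨G, hG.trans hED, hL, ?_⟩
      intro j hj
      rcases Finset.mem_insert.1 hj with rfl | hj
      · right
        intro g hg h hh e
        exact hE.injOn (hG hg) (hG hh) e
      · exact hd j hj

def KerTA {N q : ℕ} (C : Finset (Fin N → Fin q)) (y : Fin N → Fin q) (T : Finset (Fin N)) : Prop :=
  ∀ z : Fin N → Fin q, ∃ c ∈ C, c ≠ y ∧ (∀ i ∈ T, c i = y i) ∧ ∀ i, i ∉ T → c i ≠ y i ∧ c i ≠ z i

lemma aux_ker (N : ℕ) : ∃ K : ℕ, ∀ q : ℕ, ∀ C D : Finset (Fin N → Fin q), ∀ S : Finset (Fin N),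
    D ⊆ C → (∀ g ∈ D, ∀ h ∈ D, ∀ i ∈ S, g i = h i) → K ≤ D.card →
    ∃ y ∈ D, ∃ T, S ⊆ T ∧ KerTA C y T := by
  classical
  obtain ⟨K, hK⟩ := aux_sun N Finset.univ (N + 2)
  refine ⟨K, fun q C D S hDC hS hc => ?_⟩
  obtain ⟨G, hG, hL, hd⟩ := hK q D hc
  have hne : G.Nonempty := Finset.card_pos.1 (by omega)
  obtain ⟨y, hy⟩ := hne
  refine ⟨y, hG hy, Finset.univ.filter (fun i => ∀ g ∈ G, ∀ h ∈ G, g i = h i), ?_, ?_⟩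
  · intro i hi
    simp only [Finset.mem_filter, Finset.mem_univ, true_and]
    exact fun g hg h hh => hS g (hG hg) h (hG hh) i hi
  · intro z
    by_contra hcon
    push Not at hcon
    have key : ∀ c ∈ G.erase y, ∃ i, (¬ ∀ g ∈ G, ∀ h ∈ G, g i = h i) ∧ c i = z i := by
      intro c hcG
      obtain ⟨hcy, hcG⟩ := Finset.mem_erase.1 hcG
      obtain ⟨i, hi, h2⟩ := hcon c (hDC (hG hcG)) hcy (by
        intro i hi
        exact (Finset.mem_filter.1 hi).2 c hcG y hy)
      have hi' : ¬ ∀ g ∈ G, ∀ h ∈ G, g i = h i := by simpa using hi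
      refine ⟨i, hi', h2 ?_⟩
      intro e
      exact hcy (((hd i (Finset.mem_univ _)).resolve_left hi') c hcG y hy e)
    have hne : (G.erase y).Nonempty := Finset.card_pos.1 (by
      rw [Finset.card_erase_of_mem hy]; omega)
    have : Nonempty (Fin N) := ⟨(key _ hne.choose_spec).choose⟩
    choose! f hf using key
    have hinj : Set.InjOn f (G.erase y) := by
      intro c hc c' hc' e
      have h1 := hf c hc
      have h2 := hf c' hc'
      rw [← e] at h2
      exact ((hd _ (Finset.mem_univ _)).resolve_left h1.1) c (Finset.mem_of_mem_erase hc) c'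
        (Finset.mem_of_mem_erase hc') (h1.2.trans h2.2.symm)
    have := Finset.card_le_card_of_injOn (t := Finset.univ) f (by simp) hinj
    rw [Finset.card_erase_of_mem hy, Finset.card_univ, Fintype.card_fin] at this
    omega

lemma aux_two {N q : ℕ} (C : Finset (Fin N → Fin q)) (hC : IsTA 2 C) (y : Fin N → Fin q)
    (hy : y ∈ C) (A B : Finset (Fin N)) (hA : KerTA C y A) (hB : KerTA C y B)
    (h : ((A ∪ B)ᶜ).card ≤ (A \ B).card + (B \ A).card) : False := by
  classical
  obtain ⟨c, hc, hcy, hcA, hcA'⟩ := hA y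
  obtain ⟨e, he, hey, heB, heB'⟩ := hB c
  obtain ⟨R, hR, hRc⟩ := Finset.exists_subset_card_eq (min_le_left ((A ∪ B)ᶜ).card (B \ A).card)
  have hR2 : ((A ∪ B)ᶜ \ R).card ≤ (A \ B).card := by
    rw [Finset.card_sdiff_of_subset hR]; omega
  have hR1 : R.card ≤ (B \ A).card := by omega
  let x : Fin N → Fin q := fun i => if i ∈ A ∪ B then y i else if i ∈ R then c i else e i
  have hx1 : ∀ i, i ∈ A ∪ B → x i = y i := fun i hi => by simp only [x, if_pos hi]
  have hx2 : ∀ i, i ∉ A ∪ B → i ∈ R → x i = c i := fun i hi h => by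
    simp only [x, if_neg hi, if_pos h]
  have hx3 : ∀ i, i ∉ A ∪ B → i ∉ R → x i = e i := fun i hi h => by
    simp only [x, if_neg hi, if_neg h]
  have hxy : hammingDist x y ≤ ((A ∪ B)ᶜ).card := by
    apply Finset.card_le_card
    intro i hi
    simp only [Finset.mem_filter, Finset.mem_univ, true_and] at hi
    rw [Finset.mem_compl]
    exact fun h => hi (hx1 i h)
  have hsplit : ((A ∪ B)ᶜ).card = R.card + ((A ∪ B)ᶜ \ R).card := by
    rw [Finset.card_sdiff_of_subset hR]
    have := Finset.card_le_card hR
    omega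
  have hxc : (B \ A).card + ((A ∪ B)ᶜ \ R).card ≤ hammingDist x c := by
    rw [← Finset.card_union_of_disjoint]
    · apply Finset.card_le_card
      intro i hi
      simp only [Finset.mem_filter, Finset.mem_univ, true_and]
      rcases Finset.mem_union.1 hi with hi | hi
      · rw [Finset.mem_sdiff] at hi
        rw [hx1 i (Finset.mem_union_right _ hi.1)]
        exact (hcA' i hi.2).1.symm
      · rw [Finset.mem_sdiff, Finset.mem_compl] at hi
        rw [hx3 i hi.1 hi.2]
        exact (heB' i (fun h => hi.1 (Finset.mem_union_right _ h))).2
    · rw [Finset.disjoint_left]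
      intro i; simp only [Finset.mem_sdiff, Finset.mem_compl, Finset.mem_union]; tauto
  have hxe : (A \ B).card + R.card ≤ hammingDist x e := by
    rw [← Finset.card_union_of_disjoint]
    · apply Finset.card_le_card
      intro i hi
      simp only [Finset.mem_filter, Finset.mem_univ, true_and]
      rcases Finset.mem_union.1 hi with hi | hi
      · rw [Finset.mem_sdiff] at hi
        rw [hx1 i (Finset.mem_union_left _ hi.1)]
        exact (heB' i hi.2).1.symm
      · have h' := Finset.mem_compl.1 (hR hi)
        rw [hx2 i h' hi]
        exact (heB' i (fun h => h' (Finset.mem_union_right _ h))).2.symm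
    · rw [Finset.disjoint_left]
      intro i hi hi'
      have h' := Finset.mem_compl.1 (hR hi')
      exact h' (Finset.mem_union_left _ (Finset.mem_sdiff.1 hi).1)
  obtain ⟨w, hw, hlt⟩ := hC {c, e} (by
    intro w hw; simp only [Finset.mem_insert, Finset.mem_singleton] at hw
    rcases hw with rfl | rfl <;> assumption) Finset.card_le_two x (by
    intro i
    by_cases h1 : i ∈ A
    · exact ⟨c, by simp, by rw [hx1 i (Finset.mem_union_left _ h1), hcA i h1]⟩
    by_cases h2 : i ∈ B
    · exact ⟨e, by simp, by rw [hx1 i (Finset.mem_union_right _ h2), heB i h2]⟩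
    have h3 : i ∉ A ∪ B := by simp [h1, h2]
    by_cases h4 : i ∈ R
    · exact ⟨c, by simp, hx2 i h3 h4⟩
    · exact ⟨e, by simp, hx3 i h3 h4⟩)
  have := hlt y (by simp [hy, hcy.symm, hey.symm])
  simp only [Finset.mem_insert, Finset.mem_singleton] at hw
  rcases hw with rfl | rfl <;> omega

lemma aux_good {N q m : ℕ} (hm : m ≤ N) (hm4 : N ≤ 4 * m) (C : Finset (Fin N → Fin q))
    (hC : IsTA 2 C) (y : Fin N → Fin q)
    (hy : y ∈ C) (hg : ∀ S : Finset (Fin N), S.card = m → ∃ T, S ⊆ T ∧ KerTA C y T) : False := by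
  classical
  obtain ⟨S0, -, hS0⟩ := Finset.exists_subset_card_eq (s := (Finset.univ : Finset (Fin N)))
    (n := m) (by simpa using hm)
  obtain ⟨T0, hT0, hk0⟩ := hg S0 hS0
  obtain ⟨A, hA, hmax⟩ := Finset.exists_max_image (Finset.univ.filter (KerTA C y)) Finset.card
    ⟨T0, by simpa using hk0⟩
  have hA' : KerTA C y A := by simpa using hA
  have hsm : m ≤ A.card := by
    have h1 := hmax T0 (by simpa using hk0)
    have h2 := Finset.card_le_card hT0
    omega
  have hAc := Finset.card_add_card_compl A
  rw [Fintype.card_fin] at hAc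
  by_cases hs : m ≤ Aᶜ.card
  · obtain ⟨S, hS, hSm⟩ := Finset.exists_subset_card_eq hs
    obtain ⟨B, hSB, hB⟩ := hg S hSm
    have hBA := hmax B (by simpa using hB)
    refine aux_two C hC y hy A B hA' hB ?_
    have h1 : m ≤ (B \ A).card := by
      rw [← hSm]; apply Finset.card_le_card
      intro i hi
      exact Finset.mem_sdiff.2 ⟨hSB hi, Finset.mem_compl.1 (hS hi)⟩
    have h2 := Finset.card_sdiff_add_card_inter B A
    have h3 := Finset.card_sdiff_add_card_inter A B
    rw [Finset.inter_comm] at h3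
    have h4 := Finset.card_add_card_compl (A ∪ B)
    rw [Fintype.card_fin] at h4
    have h5 := Finset.card_sdiff_add_card B A
    rw [Finset.union_comm] at h5
    omega
  · obtain ⟨S, hS, -, hSm⟩ := Finset.exists_subsuperset_card_eq (Finset.subset_univ Aᶜ)
      (not_le.1 hs).le (by simpa using hm)
    obtain ⟨B, hSB, hB⟩ := hg S hSm
    refine aux_two C hC y hy A B hA' hB ?_
    have : (A ∪ B)ᶜ = ∅ := by
      rw [Finset.compl_eq_empty_iff, Finset.eq_univ_iff_forall]
      intro i
      by_cases hi : i ∈ A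
      · exact Finset.mem_union_left _ hi
      · exact Finset.mem_union_right _ (hSB (hS (Finset.mem_compl.2 hi)))
    rw [this]; simp

/-- For every positive integer `N` there is a constant `c` (depending only on `N`)
such that for every alphabet size `q`, every `q`-ary 2-traceability code of length
`N` has at most `c·q^⌈N/4⌉` codewords. -/
theorem stmt_17 (N : ℕ) (hN : 1 ≤ N) :
    ∃ c : ℕ, ∀ q : ℕ, ∀ C : Finset (Fin N → Fin q),
      IsTA 2 C → C.card ≤ c * q ^ (N ⌈/⌉ 4) := by
  classical
  obtain ⟨K, hK⟩ := aux_ker N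
  have hm : N ⌈/⌉ 4 = (N + 3) / 4 := by rw [Nat.ceilDiv_eq_add_pred_div]; rfl
  rw [hm]
  generalize hmm : (N + 3) / 4 = m
  let P : Finset (Finset (Fin N)) := Finset.powersetCard m Finset.univ
  refine ⟨P.card * K, fun q C hC => ?_⟩
  let bad : Finset (Fin N) → Finset (Fin N → Fin q) :=
    fun S => C.filter (fun y => ¬ ∃ T, S ⊆ T ∧ KerTA C y T)
  have hsub : C ⊆ P.biUnion bad := by
    intro y hy
    by_contra hcon
    refine aux_good (m := m) (by omega) (by omega) C hC y hy ?_
    intro S hS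
    by_contra hT
    apply hcon
    rw [Finset.mem_biUnion]
    exact ⟨S, by simp [P, hS], by simp only [bad, Finset.mem_filter]; exact ⟨hy, hT⟩⟩
  have hbad : ∀ S ∈ P, (bad S).card ≤ K * q ^ m := by
    intro S hS
    have hSm : S.card = m := (Finset.mem_powersetCard.1 hS).2
    let f : (Fin N → Fin q) → (S → Fin q) := fun g i => g i
    have h1 : (bad S).card ≤ K * ((bad S).image f).card := by
      apply Finset.card_le_mul_card_image
      intro v _
      by_contra hlt
      obtain ⟨y, hy, T, hT, hk⟩ := hK q C ((bad S).filter (fun g => f g = v)) S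
        ((Finset.filter_subset _ _).trans (Finset.filter_subset _ _)) (by
          intro g hg h hh i hi
          have := (Finset.mem_filter.1 hg).2.trans (Finset.mem_filter.1 hh).2.symm
          exact congrFun this ⟨i, hi⟩) (not_le.1 hlt).le
      exact (Finset.mem_filter.1 (Finset.mem_filter.1 hy).1).2 ⟨T, hT, hk⟩
    refine h1.trans (Nat.mul_le_mul_left K ?_)
    refine (Finset.card_le_univ _).trans ?_
    simp [hSm]
  calc C.card ≤ (P.biUnion bad).card := Finset.card_le_card hsub
    _ ≤ P.card * (K * q ^ m) := Finset.card_biUnion_le_card_mul _ _ _ hbad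
    _ = _ := by ring
end
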